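/- If the edge-probability function p = p(n) satisfies n·p(n) − ln n − ln ln n → ∞ and p(n) ≤ 1.02·ln n / n, then with high probability a graph G sampled from G(n,p) satisfies r_ℓ(G, Hamiltonicity) = δ(G) − 1, where δ(G) is the minimum degree of G. Equivalently, w.h.p. deleting from G the edges of any spanning subgraph of maximum degree at most δ(G) − 2 leaves a Hamiltonian graph, while deleting a suitable subgraph of maximum degree δ(G) − 1 destroys Hamiltonicity. -/

import Mathlib

open Filter Finset SimpleGraph
open scoped Classical

/-- The probability weight of a particular graph `G` on `[n]` under `G(n,p)`. -/
noncomputable def gnpWeight (n : ℕ) (p : ℝ) (G : SimpleGraph (Fin n)) : ℝ :=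
  p ^ G.edgeFinset.card * (1 - p) ^ (n.choose 2 - G.edgeFinset.card)

/-- The probability that a random graph `G ~ G(n,p)` satisfies the predicate `A`. -/
noncomputable def gnpProb (n : ℕ) (p : ℝ) (A : SimpleGraph (Fin n) → Prop) : ℝ :=
  ∑ G : SimpleGraph (Fin n), if A G then gnpWeight n p G else 0

/-- A sequence of graph properties holds with high probability in `G(n, p n)`. -/
def WHP (p : ℕ → ℝ) (A : ∀ n : ℕ, SimpleGraph (Fin n) → Prop) : Prop :=
  Tendsto (fun n => gnpProb n (p n) (A n)) atTop (nhds 1)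

/-- Number of edges of a graph. -/
noncomputable def edgeCount {V : Type*} [Fintype V] (G : SimpleGraph V) : ℕ :=
  G.edgeFinset.card

/-- Number of edges with both endpoints in `U`. -/
noncomputable def eIn {V : Type*} [Fintype V] (G : SimpleGraph V) (U : Finset V) : ℕ :=
  (G.edgeFinset.filter (fun e => ∀ v ∈ e, v ∈ U)).card

/-- Number of edges with one endpoint in `U` and the other in `Z` (for disjoint `U`, `Z`). -/
noncomputable def eBetween {V : Type*} [Fintype V] (G : SimpleGraph V) (U Z : Finset V) : ℕ :=
  ((U ×ˢ Z).filter (fun q => G.Adj q.1 q.2)).card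

/-- External neighbourhood of a vertex set. -/
noncomputable def extNbhd {V : Type*} [Fintype V] (G : SimpleGraph V) (U : Finset V) : Finset V :=
  Finset.univ.filter (fun v => v ∉ U ∧ ∃ u ∈ U, G.Adj u v)

/-- `G` is an `(R, f)`-expander: every set `U` with `|U| ≤ R` satisfies `|N(U)| ≥ f(|U|)·|U|`. -/
def IsExpander {V : Type*} [Fintype V] (G : SimpleGraph V) (R : ℝ) (f : ℕ → ℝ) : Prop :=
  ∀ U : Finset V, U.Nonempty → (U.card : ℝ) ≤ R →
    f U.card * U.card ≤ ((extNbhd G U).card : ℝ)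

/-- The expansion function `f_β` on `{1, …, ⌊β n₁⌋}`. -/
noncomputable def fBeta (β : ℝ) (n1 : ℕ) (t : ℕ) : ℝ :=
  if t = Nat.floor (β * n1) then 2 * (1 + 39 * β) / (3 * β)
  else if (t : ℝ) < (n1 : ℝ) ^ (0.1 : ℝ) then Real.log n1 ^ (0.8 : ℝ)
  else 11

/-- `G₁` is `(n₁, d, β)`-quasi-random. -/
def QuasiRandom {V : Type*} [Fintype V] (G1 : SimpleGraph V) (n1 : ℕ) (d β : ℝ) : Prop :=
  (∀ v : V, d / 150 ≤ (G1.degree v : ℝ)) ∧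
  (∀ U : Finset V, (U.card : ℝ) < (n1 : ℝ) ^ (0.11 : ℝ) * Real.log n1 →
    (eIn G1 U : ℝ) ≤ d ^ (0.13 : ℝ) * U.card) ∧
  (∀ U : Finset V, (U.card : ℝ) < 12 * β * n1 →
    (eIn G1 U : ℝ) ≤ 50 * β * d * U.card) ∧
  (∀ U Z : Finset V, Disjoint U Z → U.card = Nat.floor (β * n1) →
    Z.card = Nat.floor ((1 / 3 - 27 * β) * n1) →
    (n1 : ℝ) * Real.log (Real.log n1) ≤ (eBetween G1 U Z : ℝ))

/-- Longest path length in `G`. -/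
noncomputable def longestPath {V : Type*} [Fintype V] (G : SimpleGraph V) : ℕ :=
  sSup {l : ℕ | ∃ (u v : V) (q : G.Walk u v), q.IsPath ∧ q.length = l}

/-- `{u, v}` is a booster with respect to `Γ`. -/
def IsBooster {V : Type*} [Fintype V] (Γ : SimpleGraph V) (u v : V) : Prop :=
  u ≠ v ∧ ¬ Γ.Adj u v ∧
    ((Γ ⊔ fromEdgeSet {s(u, v)}).IsHamiltonian ∨
      longestPath Γ < longestPath (Γ ⊔ fromEdgeSet {s(u, v)}))

/-- The booster set `B_Γ(v)`. -/
noncomputable def boosterSet {V : Type*} [Fintype V] (Γ : SimpleGraph V) (v : V) : Finset V :=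
  Finset.univ.filter (fun w => IsBooster Γ v w)

/-- Membership in the family `𝓛(n, β)` with witnessing partition `V = V₁ ∪ D`. -/
def InFamilyL (n : ℕ) (β : ℝ) (G : SimpleGraph (Fin n)) (V1 D : Finset (Fin n)) : Prop :=
  Disjoint V1 D ∧ V1 ∪ D = Finset.univ ∧
  ((D.card : ℝ) ≤ (n : ℝ) ^ (0.09 : ℝ)) ∧
  (∀ u ∈ D, 2 ≤ (G.neighborFinset u ∩ V1).card) ∧
  (∀ u ∈ D, ∀ v ∈ D, ∀ q : G.Walk u v, q.IsPath → 0 < q.length →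
    2 * Real.log n / (3 * Real.log (Real.log n)) < (q.length : ℝ)) ∧
  (∀ u ∈ D, ∀ q : G.Walk u u, q.IsCycle →
    2 * Real.log n / (3 * Real.log (Real.log n)) < (q.length : ℝ)) ∧
  IsExpander (G.induce (V1 : Set (Fin n))) (β * V1.card) (fBeta β V1.card)


/-! ### Rotations of paths -/

lemma nil_pre {α : Type*} {l : List α} : [] <+: l := by simp

lemma rev_sublist_iff {α : Type*} {l₁ l₂ : List α} : l₁.reverse <:+: l₂.reverse ↔ l₁ <:+: l₂ := by
  simp

/-- A list of vertices forming a path of the graph. -/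
def PathL {n : ℕ} (Γ : SimpleGraph (Fin n)) (l : List (Fin n)) : Prop :=
  l.IsChain Γ.Adj ∧ l.Nodup

/-- Being consecutive on a list. -/
def Nb {n : ℕ} (l : List (Fin n)) (u v : Fin n) : Prop := [u, v] <:+: l ∨ [v, u] <:+: l

lemma Nb_reverse {n : ℕ} (l : List (Fin n)) (u v : Fin n) : Nb l.reverse u v ↔ Nb l u v := by
  unfold Nb
  rw [← rev_sublist_iff (l₁ := [u, v]), ← rev_sublist_iff (l₁ := [v, u])]
  simp [or_comm]

lemma infix_append_aux {n : ℕ} (b : List (Fin n)) (x u v : Fin n) :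
    ∀ a : List (Fin n), ∀ h : a ≠ [],
    ([u, v] <:+: a ++ x :: b ↔
      [u, v] <:+: a ∨ (u = a.getLast h ∧ v = x) ∨ [u, v] <:+: x :: b) := by
  intro a
  induction a with
  | nil => intro h; exact absurd rfl h
  | cons y a ih =>
    intro _
    by_cases ha : a = []
    · subst ha
      simp [List.infix_cons_iff, List.prefix_cons_iff]
    · have := ih ha
      rw [List.cons_append, List.infix_cons_iff, this, List.infix_cons_iff (l₂ := a),
        List.getLast_cons ha]
      obtain ⟨z, a', rfl⟩ := List.exists_cons_of_ne_nil ha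
      simp only [List.cons_append, List.cons_prefix_cons, nil_pre]
      tauto

lemma Nb_append {n : ℕ} (a b : List (Fin n)) (x u v : Fin n) (h : a ≠ [])
    (hx : u ≠ x) (hl : u ≠ a.getLast h) :
    Nb (a ++ x :: b) u v ↔ Nb a u v ∨ Nb (x :: b) u v := by
  unfold Nb
  rw [infix_append_aux b x u v a h, infix_append_aux b x v u a h]
  tauto

lemma infix_unique {n : ℕ} (w u u' : Fin n) : ∀ l : List (Fin n), l.Nodup →
    [w, u] <:+: l → [w, u'] <:+: l → u = u' := by
  intro l
  induction l with
  | nil => intro _ h; simp at h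
  | cons x l ih =>
    intro hn h1 h2
    rw [List.nodup_cons] at hn
    rw [List.infix_cons_iff] at h1 h2
    have key : ∀ z, [w, z] <:+: l → w ∈ l := fun z hz => hz.subset (by simp)
    rcases h1 with h1 | h1 <;> rcases h2 with h2 | h2
    · rw [List.cons_prefix_cons] at h1 h2
      cases l with
      | nil => simp at h1
      | cons y l =>
        have a1 := h1.2
        have a2 := h2.2
        rw [List.cons_prefix_cons] at a1 a2
        exact a1.1.trans a2.1.symm
    · rw [List.cons_prefix_cons] at h1
      exact absurd (h1.1 ▸ key _ h2) hn.1
    · rw [List.cons_prefix_cons] at h2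
      exact absurd (h2.1 ▸ key _ h1) hn.1
    · exact ih hn.2 h1 h2

lemma infix_unique' {n : ℕ} (w u u' : Fin n) (l : List (Fin n)) (hn : l.Nodup)
    (h1 : [u, w] <:+: l) (h2 : [u', w] <:+: l) : u = u' := by
  apply infix_unique w u u' l.reverse (List.nodup_reverse.2 hn)
  · rw [← rev_sublist_iff]; simpa using h1
  · rw [← rev_sublist_iff]; simpa using h2

lemma not_infix_head {n : ℕ} (u y : Fin n) (t : List (Fin n)) (hn : (y :: t).Nodup) :
    ¬ [u, y] <:+: y :: t := by
  intro h
  rw [List.nodup_cons] at hn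
  rw [List.infix_cons_iff] at h
  rcases h with h | h
  · rw [List.cons_prefix_cons] at h
    exact hn.1 (h.2.subset (by simp))
  · exact hn.1 (h.subset (by simp))

/-- Lists reachable from `l0` by rotations (the last vertex is kept fixed). -/
inductive Reach {n : ℕ} (Γ : SimpleGraph (Fin n)) (l0 : List (Fin n)) : List (Fin n) → Prop
  | refl : Reach Γ l0 l0
  | rot (y x : Fin n) (a b : List (Fin n)) : Reach Γ l0 ((y :: a) ++ x :: b) → Γ.Adj y x →
      Reach Γ l0 ((y :: a).reverse ++ x :: b)

lemma Reach.perm {n : ℕ} {Γ : SimpleGraph (Fin n)} {l0 l : List (Fin n)} (h : Reach Γ l0 l) :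
    l.Perm l0 := by
  induction h with
  | refl => rfl
  | rot y x a b _ _ ih => exact ((List.reverse_perm _).append_right _).trans ih

lemma Reach.getLast? {n : ℕ} {Γ : SimpleGraph (Fin n)} {l0 l : List (Fin n)} (h : Reach Γ l0 l) :
    l.getLast? = l0.getLast? := by
  induction h with
  | refl => rfl
  | rot y x a b _ _ ih =>
    rw [← ih, List.getLast?_append, List.getLast?_append, List.getLast?_eq_some_getLast (l := x :: b) (by simp)]
    rfl

lemma Reach.pathL {n : ℕ} {Γ : SimpleGraph (Fin n)} {l0 l : List (Fin n)} (h : Reach Γ l0 l)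
    (h0 : PathL Γ l0) : PathL Γ l := by
  refine ⟨?_, h.perm.nodup_iff.2 h0.2⟩
  induction h with
  | refl => exact h0.1
  | rot y x a b hr hadj ih =>
    rw [List.isChain_append] at ih ⊢
    refine ⟨?_, ih.2.1, ?_⟩
    · rw [List.isChain_reverse]
      exact ih.1.imp (fun _ _ h => h.symm)
    · intro u hu v hv
      simp at hu hv
      subst hu; subst hv; exact hadj

lemma posa {n : ℕ} (Γ : SimpleGraph (Fin n)) (y0 : Fin n) (t0 : List (Fin n))
    (h0 : PathL Γ (y0 :: t0)) (hmax : ∀ l, PathL Γ l → l.length ≤ (y0 :: t0).length)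
    (S : Finset (Fin n)) (hS : ∀ y, y ∈ S ↔ ∃ t, Reach Γ (y0 :: t0) (y :: t)) :
    (extNbhd Γ S).card < 2 * S.card := by
  have hinv : ∀ l, Reach Γ (y0 :: t0) l → ∀ u, u ∉ S → (∀ w ∈ S, ¬ Nb (y0 :: t0) u w) →
      ∀ v, (Nb l u v ↔ Nb (y0 :: t0) u v) := by
    intro l hl
    induction hl with
    | refl => intro u _ _ v; rfl
    | rot y x a b hr hadj ih =>
      intro u hu hw v
      rw [← ih u hu hw v]
      have hyS : y ∈ S := (hS y).2 ⟨_, hr⟩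
      obtain ⟨z, a', hza⟩ : ∃ z a', (y :: a).reverse = z :: a' :=
        List.exists_cons_of_ne_nil (by simp)
      have hlast : (y :: a).getLast (by simp) = z := by
        have : (y :: a) = (z :: a').reverse := by rw [← hza, List.reverse_reverse]
        simp [this]
      have hzS : z ∈ S := (hS z).2 ⟨a' ++ x :: b, by
        have := Reach.rot y x a b hr hadj
        rwa [hza] at this⟩
      have hux : u ≠ x := by
        rintro rfl
        apply hw z hzS
        rw [← ih u hu hw z]
        right
        rw [infix_append_aux b u z u (y :: a) (by simp)]
        right; left; exact ⟨hlast.symm, rfl⟩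
      have huz : u ≠ z := by rintro rfl; exact hu hzS
      have huy : u ≠ y := by rintro rfl; exact hu hyS
      rw [Nb_append _ b x u v (by simp) hux (by simpa using huy),
        Nb_append (y :: a) b x u v (by simp) hux (by rw [hlast]; exact huz), Nb_reverse]
  have hy0 : y0 ∈ S := (hS y0).2 ⟨t0, Reach.refl⟩
  have hsub : ∀ u ∈ extNbhd Γ S, ∃ w ∈ S, Nb (y0 :: t0) u w := by
    intro u hu
    simp only [extNbhd, mem_filter, mem_univ, true_and] at hu
    obtain ⟨huS, y, hyS, hadj⟩ := hu
    by_contra hcon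
    push Not at hcon
    obtain ⟨t, ht⟩ := (hS y).1 hyS
    have hp := ht.pathL h0
    have hul : u ∈ y :: t := by
      by_contra hnot
      have : PathL Γ (u :: y :: t) := ⟨List.IsChain.cons_cons hadj.symm hp.1,
        List.nodup_cons.2 ⟨hnot, hp.2⟩⟩
      have h1 := hmax _ this
      have h2 := ht.perm.length_eq
      simp at h1 h2; omega
    have hut : u ∈ t := by
      rcases List.mem_cons.1 hul with h | h
      · exact absurd (h ▸ hyS) huS
      · exact h
    obtain ⟨a, b, rfl⟩ := List.append_of_mem hut
    have hr := Reach.rot (Γ := Γ) (l0 := y0 :: t0) y u a b ht hadj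
    obtain ⟨z, a', hza⟩ : ∃ z a', (y :: a).reverse = z :: a' :=
      List.exists_cons_of_ne_nil (by simp)
    have hlast : (y :: a).getLast (by simp) = z := by
      have : (y :: a) = (z :: a').reverse := by rw [← hza, List.reverse_reverse]
      simp [this]
    rw [hza] at hr
    have hzS : z ∈ S := (hS z).2 ⟨_, hr⟩
    apply hcon z hzS
    rw [← hinv _ ht u huS hcon z]
    right
    have := infix_append_aux b u z u (y :: a) (by simp)
    rw [List.cons_append] at this
    rw [this]
    right; left; exact ⟨hlast.symm, rfl⟩
  let A := (univ : Finset (Fin n)).filter (fun u => ∃ w ∈ S, [w, u] <:+: y0 :: t0)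
  let B := (univ : Finset (Fin n)).filter (fun u => ∃ w ∈ S, [u, w] <:+: y0 :: t0)
  have hAB : extNbhd Γ S ⊆ A ∪ B := by
    intro u hu
    obtain ⟨w, hw, h⟩ := hsub u hu
    simp only [A, B, mem_union, mem_filter, mem_univ, true_and]
    rcases h with h | h
    · right; exact ⟨w, hw, h⟩
    · left; exact ⟨w, hw, h⟩
  have hA : A.card ≤ S.card := by
    have : ∀ u ∈ A, ∃ w ∈ S, [w, u] <:+: y0 :: t0 := by intro u hu; simpa [A] using hu
    choose! f hf1 hf2 using this
    refine Finset.card_le_card_of_injOn f hf1 ?_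
    intro u hu u' hu' he
    have e2 := hf2 u' hu'
    rw [← he] at e2
    exact infix_unique _ _ _ _ h0.2 (hf2 u hu) e2
  have hB : B.card ≤ (S.erase y0).card := by
    have : ∀ u ∈ B, ∃ w ∈ S, [u, w] <:+: y0 :: t0 := by intro u hu; simpa [B] using hu
    choose! f hf1 hf2 using this
    refine Finset.card_le_card_of_injOn f ?_ ?_
    · intro u hu
      refine mem_coe.2 (mem_erase.2 ⟨?_, hf1 u hu⟩)
      intro he
      have := hf2 u hu
      rw [he] at this
      exact not_infix_head _ _ _ h0.2 this
    · intro u hu u' hu' he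
      have e2 := hf2 u' hu'
      rw [← he] at e2
      exact infix_unique' _ _ _ _ h0.2 (hf2 u hu) e2
  rw [card_erase_of_mem hy0] at hB
  have h1 := card_le_card hAB
  have h2 := card_union_le A B
  have h3 : 0 < S.card := card_pos.2 ⟨y0, hy0⟩
  omega

/-- A closed Hamiltonian list yields a Hamiltonian cycle. -/
lemma ham_of_list {n : ℕ} (Γ : SimpleGraph (Fin n)) (z y : Fin n) (t : List (Fin n))
    (h : PathL Γ (z :: t)) (hlen : 3 ≤ (z :: t).length) (hlast : (z :: t).getLast? = some y)
    (hadj : Γ.Adj y z) (hall : ∀ w, w ∈ z :: t) : Γ.IsHamiltonian := by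
  intro _
  have hy : (z :: t).getLast (by simp) = y := by
    rw [List.getLast?_eq_some_getLast (by simp)] at hlast
    exact Option.some.inj hlast
  let p := Walk.ofSupport (z :: t) (by simp) h.1
  have hsup : p.support = z :: t := Walk.support_ofSupport _ _
  have hp : p.IsPath := Walk.IsPath.mk' (by rw [hsup]; exact h.2)
  have hpl : p.length = (z :: t).length - 1 := Walk.length_ofSupport _ _
  have hadj' : Γ.Adj ((z :: t).getLast (by simp)) ((z :: t).head (by simp)) := by
    rw [hy]; exact hadj
  refine ⟨_, Walk.cons hadj' p, ?_⟩
  rw [Walk.isHamiltonianCycle_iff_isCycle_and_length_eq]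
  constructor
  · rw [Walk.cons_isCycle_iff]
    refine ⟨hp, ?_⟩
    intro hmem
    rw [Sym2.eq_swap] at hmem
    have := hp.length_eq_one_of_mem_edges hmem
    omega
  · have : (z :: t).toFinset = univ := by ext w; simpa using hall w
    have hc : (z :: t).toFinset.card = (z :: t).length := List.toFinset_card_of_nodup h.2
    rw [this, card_univ] at hc
    rw [Walk.length_cons, hpl, hc]
    omega

/-- Graph with one more edge. -/
abbrev addE {n : ℕ} (Γ : SimpleGraph (Fin n)) (e : Sym2 (Fin n)) : SimpleGraph (Fin n) :=
  Γ ⊔ fromEdgeSet {e}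

/-- Boosters. -/
noncomputable def Boo {n : ℕ} (Γ : SimpleGraph (Fin n)) : Finset (Sym2 (Fin n)) :=
  ((⊤ : SimpleGraph (Fin n)).edgeFinset \ Γ.edgeFinset).filter (fun e =>
    (addE Γ e).IsHamiltonian ∨
      ∃ l, PathL (addE Γ e) l ∧ ∀ l', PathL Γ l' → l'.length < l.length)

/-- 2-expansion of sets of size at most `R`. -/
def Exp2 {n : ℕ} (Γ : SimpleGraph (Fin n)) (R : ℕ) : Prop :=
  ∀ U : Finset (Fin n), U.card ≤ R → 2 * U.card ≤ (extNbhd Γ U).card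

lemma extNbhd_mono {n : ℕ} {Γ Γ' : SimpleGraph (Fin n)} (h : Γ ≤ Γ') (U : Finset (Fin n)) :
    extNbhd Γ U ⊆ extNbhd Γ' U := by
  intro v hv
  simp only [extNbhd, mem_filter, mem_univ, true_and] at hv ⊢
  exact ⟨hv.1, hv.2.imp fun u hu => ⟨hu.1, h hu.2⟩⟩

lemma Exp2.mono {n R : ℕ} {Γ Γ' : SimpleGraph (Fin n)} (h : Γ ≤ Γ') (hE : Exp2 Γ R) :
    Exp2 Γ' R := fun U hU => (hE U hU).trans (card_le_card (extNbhd_mono h U))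

lemma cut_aux {n R : ℕ} {Γ : SimpleGraph (Fin n)} (hE : Exp2 Γ R) (hR : n < 6 * R)
    (A : Finset (Fin n)) (hA : A.Nonempty) (hA2 : 2 * A.card ≤ n) :
    ∃ x ∈ A, ∃ w ∉ A, Γ.Adj x w := by
  by_contra hcon
  push Not at hcon
  have hsub : ∀ U ⊆ A, extNbhd Γ U ⊆ A \ U := by
    intro U hU v hv
    simp only [extNbhd, mem_filter, mem_univ, true_and] at hv
    obtain ⟨h1, u, h2, h3⟩ := hv
    refine mem_sdiff.2 ⟨?_, h1⟩
    by_contra h4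
    exact hcon u (hU h2) v h4 h3
  have hpos := card_pos.2 hA
  rcases le_total A.card R with h | h
  · have h1 := hE A h
    have h2 := card_le_card (hsub A (Subset.refl _))
    rw [sdiff_self, bot_eq_empty, card_empty] at h2; omega
  · obtain ⟨U, hU, hc⟩ := exists_subset_card_eq h
    have h1 := hE U hc.le
    have h2 := card_le_card (hsub U hU)
    rw [card_sdiff_of_subset hU] at h2
    omega

lemma cut {n R : ℕ} {Γ : SimpleGraph (Fin n)} (hE : Exp2 Γ R) (hR : n < 6 * R)
    (A : Finset (Fin n)) (hA : A.Nonempty) (w : Fin n) (hw : w ∉ A) :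
    ∃ x ∈ A, ∃ w ∉ A, Γ.Adj x w := by
  rcases le_total (2 * A.card) n with h | h
  · exact cut_aux hE hR A hA h
  · obtain ⟨x, hx, v, hv, hadj⟩ := cut_aux hE hR Aᶜ ⟨w, by simpa⟩ (by
      rw [card_compl, Fintype.card_fin]; omega)
    exact ⟨v, by simpa using hv, x, by simpa using hx, hadj.symm⟩

/-- Closing a longest path. -/
lemma close_path {n R : ℕ} {Γ Γ' : SimpleGraph (Fin n)} (hE : Exp2 Γ R) (hR : n < 6 * R)
    (hle : Γ ≤ Γ') (z y : Fin n) (t : List (Fin n))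
    (h : PathL Γ (z :: t)) (hlen : 3 ≤ (z :: t).length) (hlast : (z :: t).getLast? = some y)
    (hadj : Γ'.Adj y z) :
    Γ'.IsHamiltonian ∨ ∃ l, PathL Γ' l ∧ (z :: t).length < l.length := by
  have h' : PathL Γ' (z :: t) := ⟨h.1.imp (fun _ _ h => hle h), h.2⟩
  by_cases hall : ∀ w, w ∈ z :: t
  · left; exact ham_of_list Γ' z y t h' hlen hlast hadj hall
  · right
    push Not at hall
    obtain ⟨w, hw⟩ := hall
    obtain ⟨x, hx, w', hw', hxw⟩ := cut hE hR (z :: t).toFinset ⟨z, by simp⟩ w (by simpa using hw)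
    rw [List.mem_toFinset] at hx hw'
    obtain ⟨a, b, hab⟩ := List.append_of_mem hx
    rw [hab] at h' hw' hlast
    refine ⟨w' :: (x :: b) ++ a, ⟨?_, ?_⟩, ?_⟩
    · rw [List.cons_append]
      have hc := List.isChain_append.1 h'.1
      refine List.IsChain.cons_cons (hle hxw.symm) ?_
      show List.IsChain Γ'.Adj ((x :: b) ++ a)
      rw [List.isChain_append]
      refine ⟨hc.2.1, hc.1, ?_⟩
      intro u hu v hv
      have hu' : u = y := by
        rw [List.getLast?_append] at hlast
        have e : (x :: b).getLast? = some u := hu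
        rw [e] at hlast
        simpa using hlast
      have hv' : v = z := by
        cases a with
        | nil => simp at hv
        | cons c a => simp at hv; simp at hab; rw [← hv, hab.1]
      rw [hu', hv']; exact hadj
    · rw [List.cons_append, List.nodup_cons]
      have hp : ((x :: b) ++ a).Perm (a ++ x :: b) := List.perm_append_comm
      exact ⟨fun hm => hw' (hp.mem_iff.1 hm), hp.nodup_iff.2 h'.2⟩
    · rw [hab]; simp; omega

/-- Many boosters. -/
theorem many_boosters {n R : ℕ} {Γ : SimpleGraph (Fin n)} (hE : Exp2 Γ R) (hR : n < 6 * R)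
    (hR1 : 1 ≤ R) (hn : 0 < n) (hnot : ¬ Γ.IsHamiltonian) :
    (R + 1) * (R + 1) ≤ 2 * (Boo Γ).card := by
  -- longest path
  have hbound : ∀ l, PathL Γ l → l.length ≤ n := by
    intro l hl
    have := hl.2.length_le_card
    simpa using this
  let Q : ℕ → Prop := fun k => ∃ l, PathL Γ l ∧ l.length = k
  have hQ1 : Q 1 := ⟨[⟨0, hn⟩], ⟨by simp, by simp⟩, rfl⟩
  obtain ⟨l0, hl0, hl0len⟩ : Q (Nat.findGreatest Q n) := Nat.findGreatest_spec (m := 1) hn hQ1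
  have hmax : ∀ l, PathL Γ l → l.length ≤ l0.length := by
    intro l hl
    rw [hl0len]
    exact Nat.le_findGreatest (hbound l hl) ⟨l, hl, rfl⟩
  -- ends
  have ends : ∀ l1 : List (Fin n), PathL Γ l1 → l1.length = l0.length → l1 ≠ [] →
      ∃ S : Finset (Fin n), R + 1 ≤ S.card ∧ ∀ y ∈ S, ∃ t, PathL Γ (y :: t) ∧
        (y :: t).length = l0.length ∧ (y :: t).getLast? = l1.getLast? := by
    intro l1 hp hlen hne
    obtain ⟨y0, t0, rfl⟩ := List.exists_cons_of_ne_nil hne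
    let S := (univ : Finset (Fin n)).filter (fun y => ∃ t, Reach Γ (y0 :: t0) (y :: t))
    refine ⟨S, ?_, ?_⟩
    · by_contra hcon
      have h1 := hE S (by omega)
      have h2 := posa Γ y0 t0 hp (by rw [hlen]; exact hmax) S (by intro y; simp [S])
      omega
    · intro y hy
      simp only [S, mem_filter, mem_univ, true_and] at hy
      obtain ⟨t, ht⟩ := hy
      exact ⟨t, ht.pathL hp, by rw [← hlen]; exact ht.perm.length_eq, ht.getLast?⟩
  have hl0ne : l0 ≠ [] := by
    rintro rfl
    have := hmax [⟨0, hn⟩] ⟨by simp, by simp⟩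
    simp at this
  -- the longest path has at least three vertices
  have hl3 : 3 ≤ l0.length := by
    have h1 := hE {⟨0, hn⟩} (by simpa using hR1)
    rw [card_singleton] at h1
    obtain ⟨a, b, ha, hb, hab⟩ := Finset.one_lt_card_iff.1 (show 1 < (extNbhd Γ {⟨0, hn⟩}).card by omega)
    simp only [extNbhd, mem_filter, mem_univ, true_and, mem_singleton, exists_eq_left] at ha hb
    refine hmax [a, ⟨0, hn⟩, b] ⟨?_, ?_⟩
    · simp [ha.2.symm, hb.2]
    · simp only [List.nodup_cons, List.mem_cons, List.not_mem_nil, or_false, not_or,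
        not_false_eq_true, List.nodup_nil, and_true]
      exact ⟨⟨ha.1, hab⟩, fun h => hb.1 h.symm⟩
  obtain ⟨S, hS, hS2⟩ := ends l0 hl0 rfl hl0ne
  have : ∀ y ∈ S, ∃ T : Finset (Fin n), R + 1 ≤ T.card ∧ ∀ z ∈ T, s(y, z) ∈ Boo Γ := by
    intro y hy
    obtain ⟨t, ht, htl, _⟩ := hS2 y hy
    obtain ⟨T, hT, hT2⟩ := ends (y :: t).reverse
      ⟨by rw [List.isChain_reverse]; exact ht.1.imp (fun _ _ h => h.symm), List.nodup_reverse.2 ht.2⟩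
      (by rw [List.length_reverse, htl]) (by simp)
    refine ⟨T, hT, ?_⟩
    intro z hz
    obtain ⟨t', ht', htl', hlast⟩ := hT2 z hz
    have hlast' : (z :: t').getLast? = some y := by rw [hlast]; simp
    have hyz : y ≠ z := by
      rintro rfl
      have hm : (y :: t').getLast (by simp) = y := by
        rw [List.getLast?_eq_some_getLast (by simp)] at hlast'
        exact Option.some.inj hlast'
      have h3 : t' ≠ [] := by rintro rfl; simp at htl'; omega
      rw [List.getLast_cons h3] at hm
      have := List.nodup_cons.1 ht'.2
      exact this.1 (hm ▸ List.getLast_mem h3)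
    have hno : ¬ Γ.Adj y z := by
      intro hadj
      rcases close_path hE hR le_rfl z y t' ht' (by omega) hlast' hadj with h | ⟨l, hl, hll⟩
      · exact hnot h
      · have := hmax l hl; omega
    rw [Boo, mem_filter, Finset.mem_sdiff]
    refine ⟨⟨by simpa using hyz, by simpa using hno⟩, ?_⟩
    rcases close_path (Γ' := addE Γ s(y, z)) hE hR le_sup_left z y t' ht' (by omega) hlast'
      (Or.inr (by simp [hyz])) with h | ⟨l, hl, hll⟩
    · exact Or.inl h
    · refine Or.inr ⟨l, hl, fun l' hl' => ?_⟩
      have := hmax l' hl'; omega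
  choose! T hT1 hT2 using this
  -- count ordered pairs
  let P := (univ : Finset (Fin n × Fin n)).filter (fun q => s(q.1, q.2) ∈ Boo Γ)
  have hP1 : (R + 1) * (R + 1) ≤ P.card := by
    have h1 : (S.sigma T).card ≤ P.card := by
      refine Finset.card_le_card_of_injOn (fun q => (q.1, q.2)) ?_ ?_
      · rintro ⟨y, z⟩ hq
        simp only [coe_sigma, Set.mem_sigma_iff, mem_coe] at hq
        simpa [P] using hT2 y hq.1 z hq.2
      · rintro ⟨y, z⟩ _ ⟨y', z'⟩ _ he
        simp at he
        obtain ⟨rfl, rfl⟩ := he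
        rfl
    rw [card_sigma] at h1
    have h2 : ∑ _y ∈ S, (R + 1) ≤ ∑ y ∈ S, (T y).card := sum_le_sum hT1
    rw [sum_const, smul_eq_mul] at h2
    have h3 : (R + 1) * (R + 1) ≤ S.card * (R + 1) := Nat.mul_le_mul_right _ hS
    omega
  have hP2 : P.card ≤ 2 * (Boo Γ).card := by
    refine Finset.card_le_mul_card_image_of_maps_to (f := fun q : Fin n × Fin n => s(q.1, q.2))
      (s := P) (t := Boo Γ) (by intro q hq; simpa [P] using hq) 2 ?_
    intro e he
    induction e with | _ a b =>
    calc _ ≤ ({(a, b), (b, a)} : Finset (Fin n × Fin n)).card := by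
          apply card_le_card
          rintro ⟨c, d⟩ hq
          simp only [mem_filter, Sym2.eq_iff] at hq
          simp only [mem_insert, mem_singleton, Prod.mk.injEq]
          exact hq.2
      _ ≤ 2 := card_le_two
  omega

lemma edge_addE {n : ℕ} (Γ Γ' : SimpleGraph (Fin n)) (e : Sym2 (Fin n)) (hΓ : Γ' = addE Γ e) :
    Γ'.edgeFinset.card ≤ Γ.edgeFinset.card + 1 := by
  have : Γ'.edgeFinset ⊆ insert e Γ.edgeFinset := by
    intro f hf
    rw [mem_edgeFinset, hΓ, edgeSet_sup] at hf
    rw [mem_insert, mem_edgeFinset]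
    rcases hf with h | h
    · exact Or.inr h
    · rw [edgeSet_fromEdgeSet] at h; exact Or.inl h.1
  exact (card_le_card this).trans (card_insert_le _ _)

/-- Adding boosters one by one. -/
theorem ham_of_boosters {n : ℕ} {Γ0 G' : SimpleGraph (Fin n)} (hle : Γ0 ≤ G')
    (hb : ∀ Γ, Γ0 ≤ Γ → Γ ≤ G' → Γ.edgeFinset.card ≤ Γ0.edgeFinset.card + n →
      ¬ Γ.IsHamiltonian → ∃ e ∈ Boo Γ, e ∈ G'.edgeFinset) : G'.IsHamiltonian := by
  have : ∀ k, k ≤ n + 1 → ∃ Γ, Γ0 ≤ Γ ∧ Γ ≤ G' ∧ Γ.edgeFinset.card ≤ Γ0.edgeFinset.card + k ∧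
      (Γ.IsHamiltonian ∨ ∃ l, PathL Γ l ∧ k ≤ l.length) := by
    intro k
    induction k with
    | zero => exact fun _ => ⟨Γ0, le_rfl, hle, le_rfl, Or.inr ⟨[], ⟨by simp, by simp⟩, by simp⟩⟩
    | succ k ih =>
      intro hk
      obtain ⟨Γ, h1, h2, h3, h4⟩ := ih (by omega)
      by_cases hH : Γ.IsHamiltonian
      · exact ⟨Γ, h1, h2, by omega, Or.inl hH⟩
      · obtain ⟨l, hl, hlk⟩ := h4.resolve_left hH
        obtain ⟨e, he, heG⟩ := hb Γ h1 h2 (by omega) hH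
        refine ⟨addE Γ e, h1.trans le_sup_left, sup_le h2 ?_, ?_, ?_⟩
        · intro a b hab
          simp at hab
          rw [mem_edgeFinset, ← hab.1] at heG
          exact heG
        · have := edge_addE Γ _ e rfl; omega
        · rw [Boo, mem_filter] at he
          rcases he.2 with h | ⟨l', hl', hll⟩
          · exact Or.inl h
          · exact Or.inr ⟨l', hl', by have := hll l hl; omega⟩
  obtain ⟨Γ, _, h2, _, h4⟩ := this (n + 1) le_rfl
  rcases h4 with h | ⟨l, hl, hlk⟩
  · exact h.mono h2
  · have := hl.2.length_le_card
    simp at this; omega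


/-! ### Probability toolkit -/

/-- All pairs. -/
noncomputable def EE (n : ℕ) : Finset (Sym2 (Fin n)) := (⊤ : SimpleGraph (Fin n)).edgeFinset

lemma card_EE (n : ℕ) : (EE n).card = n.choose 2 := by
  have := card_edgeFinset_top_eq_card_choose_two (V := Fin n)
  rw [Fintype.card_fin] at this
  rw [← this, EE]

lemma mem_EE {n : ℕ} (a b : Fin n) : s(a, b) ∈ EE n ↔ a ≠ b := by
  simp [EE]

lemma edge_sub_EE {n : ℕ} (G : SimpleGraph (Fin n)) : G.edgeFinset ⊆ EE n := by
  intro e he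
  induction e with | _ a b =>
  rw [mem_edgeFinset, mem_edgeSet] at he
  exact (mem_EE a b).2 he.ne

lemma sum_graph {n : ℕ} (f : Finset (Sym2 (Fin n)) → ℝ) :
    ∑ G : SimpleGraph (Fin n), f G.edgeFinset = ∑ S ∈ (EE n).powerset, f S := by
  refine Finset.sum_bij (fun G _ => G.edgeFinset) ?_ ?_ ?_ ?_
  · intro G _; rw [mem_powerset]; exact edge_sub_EE G
  · intro G _ G' _ h
    have h' : (G.edgeFinset : Set (Sym2 (Fin n))) = G'.edgeFinset := by rw [h]
    rw [coe_edgeFinset, coe_edgeFinset] at h'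
    exact edgeSet_inj.1 h'
  · intro S hS
    rw [mem_powerset] at hS
    obtain ⟨G, hG⟩ : ∃ G : SimpleGraph (Fin n), G = fromEdgeSet (S : Set (Sym2 (Fin n))) := ⟨_, rfl⟩
    refine ⟨G, mem_univ _, ?_⟩
    ext e
    rw [mem_edgeFinset, hG, edgeSet_fromEdgeSet]
    constructor
    · intro h; exact h.1
    · intro h
      refine ⟨h, ?_⟩
      have := hS h
      rw [EE, mem_edgeFinset] at this
      exact (⊤ : SimpleGraph (Fin n)).not_isDiag_of_mem_edgeSet this
  · intro G _; rfl

/-- Expectation. -/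
noncomputable def gE (n : ℕ) (p : ℝ) (f : SimpleGraph (Fin n) → ℝ) : ℝ :=
  ∑ G : SimpleGraph (Fin n), gnpWeight n p G * f G

lemma gE_prod {n : ℕ} (p : ℝ) (a b : Sym2 (Fin n) → ℝ) :
    gE n p (fun G => (∏ e ∈ G.edgeFinset, a e) * ∏ e ∈ EE n \ G.edgeFinset, b e) =
      ∏ e ∈ EE n, (p * a e + (1 - p) * b e) := by
  rw [Finset.prod_add, gE]
  rw [← sum_graph (fun S => (∏ e ∈ S, p * a e) * ∏ e ∈ EE n \ S, (1 - p) * b e)]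
  refine sum_congr rfl fun G _ => ?_
  rw [prod_mul_distrib, prod_mul_distrib, prod_const, prod_const,
    card_sdiff_of_subset (edge_sub_EE G), card_EE, gnpWeight]
  ring

lemma gnpWeight_nonneg {n : ℕ} {p : ℝ} (h0 : 0 ≤ p) (h1 : p ≤ 1) (G : SimpleGraph (Fin n)) :
    0 ≤ gnpWeight n p G :=
  mul_nonneg (pow_nonneg h0 _) (pow_nonneg (by linarith) _)

lemma gE_one {n : ℕ} (p : ℝ) : gE n p (fun _ => 1) = 1 := by
  have := gE_prod (n := n) p (fun _ => 1) (fun _ => 1)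
  simpa using this

lemma gnpProb_eq {n : ℕ} (p : ℝ) (A : SimpleGraph (Fin n) → Prop) :
    gnpProb n p A = gE n p (fun G => if A G then 1 else 0) := by
  unfold gnpProb gE
  refine sum_congr rfl fun G _ => ?_
  by_cases h : A G <;> simp [h]

lemma gE_mono {n : ℕ} {p : ℝ} (h0 : 0 ≤ p) (h1 : p ≤ 1) {f g : SimpleGraph (Fin n) → ℝ}
    (h : ∀ G, f G ≤ g G) : gE n p f ≤ gE n p g :=
  sum_le_sum fun G _ => mul_le_mul_of_nonneg_left (h G) (gnpWeight_nonneg h0 h1 G)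

lemma prob_le_gE {n : ℕ} {p : ℝ} (h0 : 0 ≤ p) (h1 : p ≤ 1) {A : SimpleGraph (Fin n) → Prop}
    {f : SimpleGraph (Fin n) → ℝ} (hf : ∀ G, 0 ≤ f G) (h : ∀ G, A G → 1 ≤ f G) :
    gnpProb n p A ≤ gE n p f := by
  rw [gnpProb_eq]
  apply gE_mono h0 h1
  intro G
  split_ifs with hA
  · exact h G hA
  · exact hf G

lemma prob_mono {n : ℕ} {p : ℝ} (h0 : 0 ≤ p) (h1 : p ≤ 1) {A B : SimpleGraph (Fin n) → Prop}
    (h : ∀ G, A G → B G) : gnpProb n p A ≤ gnpProb n p B := by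
  rw [gnpProb_eq p B]
  refine prob_le_gE h0 h1 (fun G => by split_ifs <;> norm_num) (fun G hG => ?_)
  rw [if_pos (h G hG)]

lemma prob_nonneg {n : ℕ} {p : ℝ} (h0 : 0 ≤ p) (h1 : p ≤ 1) (A : SimpleGraph (Fin n) → Prop) :
    0 ≤ gnpProb n p A := by
  apply sum_nonneg
  intro G _
  split_ifs
  · exact gnpWeight_nonneg h0 h1 G
  · exact le_rfl

lemma prob_not {n : ℕ} (p : ℝ) (A : SimpleGraph (Fin n) → Prop) :
    gnpProb n p A = 1 - gnpProb n p (fun G => ¬ A G) := by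
  rw [← gE_one (n := n) p, gE, gnpProb, gnpProb, ← sum_sub_distrib]
  refine sum_congr rfl fun G _ => ?_
  by_cases h : A G <;> simp [h]

lemma prob_union {n : ℕ} {p : ℝ} (h0 : 0 ≤ p) (h1 : p ≤ 1) {ι : Type*} (I : Finset ι)
    (A : ι → SimpleGraph (Fin n) → Prop) :
    gnpProb n p (fun G => ∃ i ∈ I, A i G) ≤ ∑ i ∈ I, gnpProb n p (A i) := by
  unfold gnpProb
  rw [sum_comm]
  refine sum_le_sum fun G _ => ?_
  have hnn : ∀ i ∈ I, 0 ≤ (if A i G then gnpWeight n p G else 0) := by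
    intro i _; split_ifs
    · exact gnpWeight_nonneg h0 h1 G
    · exact le_rfl
  split_ifs with h
  · obtain ⟨i, hi, hA⟩ := h
    have := single_le_sum hnn hi
    rwa [if_pos hA] at this
  · exact sum_nonneg hnn

lemma prob_or {n : ℕ} {p : ℝ} (h0 : 0 ≤ p) (h1 : p ≤ 1)
    (A B : SimpleGraph (Fin n) → Prop) :
    gnpProb n p (fun G => A G ∨ B G) ≤ gnpProb n p A + gnpProb n p B := by
  unfold gnpProb
  rw [← sum_add_distrib]
  refine sum_le_sum fun G _ => ?_
  have := gnpWeight_nonneg h0 h1 G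
  by_cases hA : A G <;> by_cases hB : B G <;> simp [hA, hB, this]

/-- Exponential moment bound together with a set of required edges. -/
lemma master {n : ℕ} {p : ℝ} (h0 : 0 ≤ p) (h1 : p ≤ 1) (R : Finset (Sym2 (Fin n)))
    (hR : R ⊆ EE n) (θ : Sym2 (Fin n) → ℝ) (hθ : ∀ e ∈ R, θ e = 0) (t : ℝ)
    (A : SimpleGraph (Fin n) → Prop)
    (hA : ∀ G, A G → R ⊆ G.edgeFinset ∧ t ≤ ∑ e ∈ G.edgeFinset, θ e) :
    gnpProb n p A ≤ p ^ R.card * Real.exp (-t + ∑ e ∈ EE n, p * (Real.exp (θ e) - 1)) := by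
  let a : Sym2 (Fin n) → ℝ := fun e => Real.exp (θ e)
  let b : Sym2 (Fin n) → ℝ := fun e => if e ∈ R then 0 else 1
  have hb : ∀ e, 0 ≤ b e := by intro e; simp only [b]; split_ifs <;> norm_num
  have key : gnpProb n p A ≤ gE n p (fun G => Real.exp (-t) *
      ((∏ e ∈ G.edgeFinset, a e) * ∏ e ∈ EE n \ G.edgeFinset, b e)) := by
    refine prob_le_gE h0 h1 (fun G => ?_) (fun G hG => ?_)
    · exact mul_nonneg (Real.exp_pos _).le (mul_nonneg (prod_nonneg fun e _ => (Real.exp_pos _).le)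
        (prod_nonneg fun e _ => hb e))
    · obtain ⟨hRG, ht⟩ := hA G hG
      have : ∏ e ∈ EE n \ G.edgeFinset, b e = 1 := by
        apply prod_eq_one
        intro e he
        rw [Finset.mem_sdiff] at he
        simp only [b]
        rw [if_neg]
        intro h; exact he.2 (hRG h)
      rw [this, mul_one, ← Real.exp_sum, ← Real.exp_add]
      apply Real.one_le_exp
      linarith
  refine key.trans ?_
  have e1 : gE n p (fun G => Real.exp (-t) *
      ((∏ e ∈ G.edgeFinset, a e) * ∏ e ∈ EE n \ G.edgeFinset, b e)) =
      Real.exp (-t) * ∏ e ∈ EE n, (p * a e + (1 - p) * b e) := by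
    rw [← gE_prod, gE, gE, mul_sum]
    refine sum_congr rfl fun G _ => ?_
    ring
  rw [e1, Real.exp_add, Real.exp_sum]
  have e2 : ∏ e ∈ EE n, (p * a e + (1 - p) * b e) ≤
      ∏ e ∈ EE n, ((if e ∈ R then p else 1) * Real.exp (p * (Real.exp (θ e) - 1))) := by
    refine prod_le_prod (fun e _ => ?_) (fun e _ => ?_)
    · exact add_nonneg (mul_nonneg h0 (Real.exp_pos _).le) (mul_nonneg (by linarith) (hb e))
    · simp only [a, b]
      split_ifs with he
      · rw [hθ e he]; simp
      · have := Real.add_one_le_exp (p * (Real.exp (θ e) - 1))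
        linarith
  have e3 : ∏ e ∈ EE n, (if e ∈ R then p else 1) = p ^ R.card := by
    rw [prod_ite_mem, inter_eq_right.2 hR, prod_const]
  rw [prod_mul_distrib, e3] at e2
  calc _ ≤ Real.exp (-t) * _ := mul_le_mul_of_nonneg_left e2 (Real.exp_pos _).le
    _ = _ := by ring

/-- One-set version. -/
lemma master1 {n : ℕ} {p : ℝ} (h0 : 0 ≤ p) (h1 : p ≤ 1) (F : Finset (Sym2 (Fin n)))
    (hF : F ⊆ EE n) (θ t : ℝ) (A : SimpleGraph (Fin n) → Prop)
    (hA : ∀ G, A G → t ≤ θ * (G.edgeFinset ∩ F).card) :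
    gnpProb n p A ≤ Real.exp (-t + F.card * (p * (Real.exp θ - 1))) := by
  have := master h0 h1 ∅ (empty_subset _) (fun e => if e ∈ F then θ else 0) (by simp) t A
    (fun G hG => ⟨empty_subset _, by
      rw [sum_ite_mem, sum_const, nsmul_eq_mul, mul_comm]; exact hA G hG⟩)
  refine this.trans (le_of_eq ?_)
  rw [card_empty, pow_zero, one_mul]
  congr 2
  calc _ = ∑ e ∈ EE n, if e ∈ F then p * (Real.exp θ - 1) else 0 := by
        refine sum_congr rfl fun e _ => ?_
        split_ifs <;> simp
    _ = _ := by rw [sum_ite_mem, inter_eq_right.2 hF, sum_const, nsmul_eq_mul]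

lemma sum_pow_graph {n : ℕ} (x : ℝ) :
    ∑ G : SimpleGraph (Fin n), x ^ G.edgeFinset.card = (1 + x) ^ (n.choose 2) := by
  rw [sum_graph (fun S => x ^ S.card), ← card_EE, add_comm, ← Finset.prod_const,
    Finset.prod_add]
  refine sum_congr rfl fun S _ => ?_
  simp

/-- Binomial lower tail. -/
noncomputable def bt (p : ℝ) (N k : ℕ) : ℝ :=
  ∑ j ∈ range (k + 1), (N.choose j) * p ^ j * (1 - p) ^ (N - j)

lemma bt_sum {α : Type*} [DecidableEq α] (p : ℝ) (F : Finset α) (k : ℕ) :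
    ∑ A ∈ F.powerset.filter (fun A => A.card ≤ k), p ^ A.card * (1 - p) ^ (F \ A).card =
      bt p F.card k := by
  have h := sum_fiberwise_of_maps_to (s := F.powerset.filter (fun A => A.card ≤ k))
    (t := range (k + 1)) (g := fun A => A.card) (by
      intro A hA; rw [mem_filter] at hA; rw [mem_range]; omega)
    (fun A => p ^ A.card * (1 - p) ^ (F \ A).card)
  rw [← h, bt]
  refine sum_congr rfl fun j hj => ?_
  rw [mem_range] at hj
  have : (F.powerset.filter (fun A => A.card ≤ k)).filter (fun A => A.card = j) =
      F.powersetCard j := by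
    ext A
    simp only [mem_filter, mem_powerset, mem_powersetCard]
    constructor
    · rintro ⟨⟨h1, _⟩, h3⟩; exact ⟨h1, h3⟩
    · rintro ⟨h1, h2⟩; exact ⟨⟨h1, by omega⟩, h2⟩
  rw [this]
  calc _ = ∑ A ∈ F.powersetCard j, p ^ j * (1 - p) ^ (F.card - j) := by
        refine sum_congr rfl fun A hA => ?_
        rw [mem_powersetCard] at hA
        rw [card_sdiff_of_subset hA.1, hA.2]
    _ = _ := by rw [sum_const, card_powersetCard, nsmul_eq_mul, mul_assoc]

lemma prob_exact {n : ℕ} (p : ℝ) (F A : Finset (Sym2 (Fin n))) (hF : F ⊆ EE n) (hA : A ⊆ F) :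
    gnpProb n p (fun G => G.edgeFinset ∩ F = A) = p ^ A.card * (1 - p) ^ (F \ A).card := by
  let a : Sym2 (Fin n) → ℝ := fun e => if e ∈ F \ A then 0 else 1
  let b : Sym2 (Fin n) → ℝ := fun e => if e ∈ A then 0 else 1
  have h := gE_prod p a b
  have e1 : gnpProb n p (fun G => G.edgeFinset ∩ F = A) = gE n p (fun G =>
      (∏ e ∈ G.edgeFinset, a e) * ∏ e ∈ EE n \ G.edgeFinset, b e) := by
    rw [gnpProb_eq]
    congr 1
    ext G
    by_cases hG : G.edgeFinset ∩ F = A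
    · rw [if_pos hG]
      have h1 : ∏ e ∈ G.edgeFinset, a e = 1 := by
        apply prod_eq_one
        intro e he
        simp only [a]
        rw [if_neg]
        intro h; rw [Finset.mem_sdiff] at h
        exact h.2 (hG ▸ mem_inter.2 ⟨he, h.1⟩)
      have h2 : ∏ e ∈ EE n \ G.edgeFinset, b e = 1 := by
        apply prod_eq_one
        intro e he
        simp only [b]
        rw [if_neg]
        intro h; rw [Finset.mem_sdiff] at he
        rw [← hG, mem_inter] at h
        exact he.2 h.1
      rw [h1, h2, one_mul]
    · rw [if_neg hG]
      symm
      rw [mul_eq_zero]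
      by_contra hcon
      push Not at hcon
      apply hG
      ext e
      constructor
      · intro he
        rw [mem_inter] at he
        by_contra heA
        exact hcon.1 (prod_eq_zero he.1 (by simp only [a]; rw [if_pos (Finset.mem_sdiff.2 ⟨he.2, heA⟩)]))
      · intro he
        rw [mem_inter]
        refine ⟨?_, hA he⟩
        by_contra heG
        exact hcon.2 (prod_eq_zero (Finset.mem_sdiff.2 ⟨hF (hA he), heG⟩)
          (by simp only [b]; rw [if_pos he]))
  rw [e1, h]
  have e2 : ∀ e ∈ EE n, p * a e + (1 - p) * b e =
      (if e ∈ A then p else 1) * (if e ∈ F \ A then (1 - p) else 1) := by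
    intro e _
    simp only [a, b]
    by_cases h1 : e ∈ A
    · have : e ∉ F \ A := fun h => (Finset.mem_sdiff.1 h).2 h1
      simp [h1]
    · by_cases h2 : e ∈ F \ A <;> simp [h1, h2]
  rw [prod_congr rfl e2, prod_mul_distrib, prod_ite_mem, prod_ite_mem,
    inter_eq_right.2 (hA.trans hF), inter_eq_right.2 (sdiff_subset.trans hF), prod_const, prod_const]

lemma prob_two {n : ℕ} (p : ℝ) (F F' : Finset (Sym2 (Fin n))) (hF : F ⊆ EE n) (hF' : F' ⊆ EE n)
    (hd : Disjoint F F') (k k' : ℕ) :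
    gnpProb n p (fun G => (G.edgeFinset ∩ F).card ≤ k ∧ (G.edgeFinset ∩ F').card ≤ k') =
      bt p F.card k * bt p F'.card k' := by
  rw [← bt_sum, ← bt_sum, sum_mul_sum]
  have e1 : ∀ A ∈ F.powerset.filter (fun A => A.card ≤ k),
      ∀ A' ∈ F'.powerset.filter (fun A => A.card ≤ k'),
      (p ^ A.card * (1 - p) ^ (F \ A).card) * (p ^ A'.card * (1 - p) ^ (F' \ A').card) =
      gnpProb n p (fun G => G.edgeFinset ∩ (F ∪ F') = A ∪ A') := by
    intro A hA A' hA'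
    rw [mem_filter, mem_powerset] at hA hA'
    have hdA : Disjoint A A' := hd.mono hA.1 hA'.1
    rw [prob_exact p (F ∪ F') (A ∪ A') (union_subset hF hF') (union_subset_union hA.1 hA'.1),
      card_union_of_disjoint hdA]
    have : (F ∪ F') \ (A ∪ A') = (F \ A) ∪ (F' \ A') := by
      ext e
      simp only [Finset.mem_sdiff, mem_union]
      have h1 : e ∈ F → e ∉ F' := fun h h' => Finset.disjoint_left.1 hd h h'
      have h2 := @hA.1 e
      have h3 := @hA'.1 e
      tauto
    rw [this, card_union_of_disjoint (hd.mono sdiff_subset sdiff_subset), pow_add, pow_add]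
    ring
  rw [sum_congr rfl fun A hA => sum_congr rfl fun A' hA' => e1 A hA A' hA']
  unfold gnpProb
  symm
  rw [sum_congr rfl fun A _ => sum_comm, sum_comm]
  refine sum_congr rfl fun G _ => ?_
  have e2 : ∀ A ∈ F.powerset.filter (fun A => A.card ≤ k),
      ∀ A' ∈ F'.powerset.filter (fun A => A.card ≤ k'),
      (if G.edgeFinset ∩ (F ∪ F') = A ∪ A' then gnpWeight n p G else 0) =
      if A = G.edgeFinset ∩ F then (if A' = G.edgeFinset ∩ F' then gnpWeight n p G else 0) else 0 := by
    intro A hA A' hA'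
    rw [mem_filter, mem_powerset] at hA hA'
    have : G.edgeFinset ∩ (F ∪ F') = A ∪ A' ↔ A = G.edgeFinset ∩ F ∧ A' = G.edgeFinset ∩ F' := by
      have h1 : ∀ e, e ∈ F → e ∉ F' := fun e h h' => Finset.disjoint_left.1 hd h h'
      constructor
      · intro h
        have h' : ∀ e, e ∈ G.edgeFinset ∩ (F ∪ F') ↔ e ∈ A ∪ A' := fun e => by rw [h]
        simp only [mem_inter, mem_union] at h'
        constructor
        · ext e
          have := h' e; have := h1 e; have := @hA.1 e; have := @hA'.1 e
          rw [mem_inter]; tauto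
        · ext e
          have := h' e; have := h1 e; have := @hA.1 e; have := @hA'.1 e
          rw [mem_inter]; tauto
      · rintro ⟨rfl, rfl⟩
        rw [inter_union_distrib_left]
    by_cases h1 : A = G.edgeFinset ∩ F
    · by_cases h2 : A' = G.edgeFinset ∩ F'
      · rw [if_pos (this.2 ⟨h1, h2⟩), if_pos h1, if_pos h2]
      · rw [if_neg (fun h => h2 (this.1 h).2), if_pos h1, if_neg h2]
    · rw [if_neg (fun h => h1 (this.1 h).1), if_neg h1]
  refine Eq.trans (sum_congr rfl fun A hA => sum_congr rfl fun A' hA' =>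
    (show _ = (if A = G.edgeFinset ∩ F then (if A' = G.edgeFinset ∩ F' then gnpWeight n p G else 0) else 0)
      by convert e2 A hA A' hA')) ?_
  beta_reduce
  by_cases h1 : (G.edgeFinset ∩ F).card ≤ k <;> by_cases h2 : (G.edgeFinset ∩ F').card ≤ k'
  · rw [if_pos ⟨h1, h2⟩, sum_eq_single_of_mem (G.edgeFinset ∩ F)
      (mem_filter.2 ⟨mem_powerset.2 inter_subset_right, h1⟩),
      sum_eq_single_of_mem (G.edgeFinset ∩ F')
      (mem_filter.2 ⟨mem_powerset.2 inter_subset_right, h2⟩)]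
    · simp
    · intro A' _ h; simp [h]
    · intro A _ h; simp [h]
  all_goals
    rw [if_neg (by tauto)]
    refine sum_eq_zero fun A hA => sum_eq_zero fun A' hA' => ?_
    rw [mem_filter] at hA hA'
    split_ifs with h3 h4
    · subst h3; subst h4; tauto
    · rfl
    · rfl


/-! ### Deterministic part -/

structure Good (n : ℕ) (L σ : ℝ) (G : SimpleGraph (Fin n)) : Prop where
  h1 : ∀ v, 2 ≤ G.degree v
  h2 : ∃ v, (G.degree v : ℝ) ≤ 0.01 * L
  h3 : ∀ S : Finset (Fin n), S.Nonempty → (S.card : ℝ) ≤ σ * n →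
    (eIn G S : ℝ) < L * S.card / 16000
  h4 : ∀ S : Finset (Fin n), S.card = 5 → eIn G S ≤ 5
  h5 : ∀ S : Finset (Fin n), S.card ≤ 5 → ∀ x ∈ S, ∀ y ∈ S, x ≠ y → S.card ≤ eIn G S + 1 →
    0.1 * L ≤ G.degree x ∨ 0.1 * L ≤ G.degree y
  h6 : ∀ U W : Finset (Fin n), Disjoint U W → σ / 4 * n ≤ U.card → (n : ℝ) / 4 ≤ W.card →
    (U.card : ℝ) * L / 16 ≤ eBetween G U W
  h7 : (G.edgeFinset.card : ℝ) ≤ n * L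
  h8 : ∀ Γ ≤ G, (Γ.edgeFinset.card : ℝ) ≤ 0.001 * n * L → (n : ℝ) ^ 2 / 32 ≤ (Boo Γ).card →
    0.005 * n * L < (G.edgeFinset ∩ Boo Γ).card

/-- edges inside a set -/
noncomputable def inE {V : Type*} [Fintype V] (G : SimpleGraph V) (U : Finset V) : Finset (Sym2 V) :=
  G.edgeFinset.filter (fun e => ∀ v ∈ e, v ∈ U)

lemma eIn_eq {V : Type*} [Fintype V] (G : SimpleGraph V) (U : Finset V) :
    eIn G U = (inE G U).card := rfl

lemma mem_inE {V : Type*} [Fintype V] (G : SimpleGraph V) (U : Finset V) (e : Sym2 V) :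
    e ∈ inE G U ↔ e ∈ G.edgeSet ∧ ∀ v ∈ e, v ∈ U := by
  unfold inE; rw [mem_filter, mem_edgeFinset]

lemma walk_eIn {n : ℕ} {G : SimpleGraph (Fin n)} {u v : Fin n} (q : G.Walk u v) :
    q.support.toFinset.card ≤ eIn G q.support.toFinset + 1 := by
  induction q with
  | nil => simp
  | @cons u v w h q ih =>
    rw [Walk.support_cons, List.toFinset_cons]
    by_cases hu : u ∈ q.support.toFinset
    · rw [insert_eq_self.2 hu]; exact ih
    · rw [card_insert_of_notMem hu]
      have : eIn G q.support.toFinset + 1 ≤ eIn G (insert u q.support.toFinset) := by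
        rw [eIn_eq, eIn_eq]
        rw [← card_insert_of_notMem (a := s(u, v))]
        · apply card_le_card
          intro e he
          rw [mem_insert] at he
          rcases he with rfl | he
          · rw [mem_inE]
            refine ⟨h, ?_⟩
            intro x hx
            rw [Sym2.mem_iff] at hx
            rcases hx with rfl | rfl
            · exact mem_insert_self _ _
            · exact mem_insert_of_mem (List.mem_toFinset.2 q.start_mem_support)
          · rw [mem_inE] at he ⊢
            exact ⟨he.1, fun x hx => mem_insert_of_mem (he.2 x hx)⟩
        · intro h'
          rw [mem_inE] at h'
          exact hu (h'.2 u (Sym2.mem_mk_left _ _))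
      omega

lemma sep {n : ℕ} {G : SimpleGraph (Fin n)} {L σ : ℝ} (hG : Good n L σ G) {u v : Fin n}
    (hu : (G.degree u : ℝ) < 0.1 * L) (hv : (G.degree v : ℝ) < 0.1 * L) (q : G.Walk u v)
    (hq : q.length ≤ 4) : u = v := by
  by_contra huv
  have hc : q.support.toFinset.card ≤ 5 :=
    (List.toFinset_card_le _).trans (by rw [Walk.length_support]; omega)
  rcases hG.h5 q.support.toFinset hc u (List.mem_toFinset.2 q.start_mem_support) v
    (List.mem_toFinset.2 q.end_mem_support) huv (walk_eIn q) with h | h <;> linarith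

lemma codeg {n : ℕ} {G : SimpleGraph (Fin n)} {L σ : ℝ} (hG : Good n L σ G) {a b : Fin n}
    (hab : a ≠ b) : (univ.filter fun x => G.Adj a x ∧ G.Adj b x).card ≤ 2 := by
  by_contra hc
  obtain ⟨x, y, z, hx, hy, hz, hxy, hxz, hyz⟩ := Finset.two_lt_card_iff.1 (not_le.1 hc)
  simp only [mem_filter, mem_univ, true_and] at hx hy hz
  have n1 := hx.1.ne; have n2 := hx.2.ne
  have n3 := hy.1.ne; have n4 := hy.2.ne
  have n5 := hz.1.ne; have n6 := hz.2.ne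
  have hS : ({a, b, x, y, z} : Finset (Fin n)).card = 5 := by
    rw [card_insert_of_notMem, card_insert_of_notMem, card_insert_of_notMem,
      card_insert_of_notMem, card_singleton] <;> simp [*]
  have := hG.h4 _ hS
  have h6 : ({s(a,x), s(a,y), s(a,z), s(b,x), s(b,y), s(b,z)} : Finset (Sym2 (Fin n))).card = 6 := by
    rw [card_insert_of_notMem, card_insert_of_notMem, card_insert_of_notMem,
      card_insert_of_notMem, card_insert_of_notMem, card_singleton] <;>
      simp only [mem_insert, mem_singleton, Sym2.eq_iff, not_or] <;> tauto
  have h7 : ({s(a,x), s(a,y), s(a,z), s(b,x), s(b,y), s(b,z)} : Finset (Sym2 (Fin n))).card ≤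
      eIn G {a, b, x, y, z} := by
    rw [eIn_eq]
    apply card_le_card
    intro e he
    simp only [mem_insert, mem_singleton] at he
    rw [mem_inE]
    rcases he with rfl | rfl | rfl | rfl | rfl | rfl <;> simp [hx, hy, hz]
  omega

/-- greedy hitting sets -/
lemma hitting {ι α : Type*} [DecidableEq α] (I : Finset ι) (E : Finset α) (f : ι → Finset α) (a : ℝ)
    (ha1 : a ≤ 1) (hE : E.Nonempty)
    (hf : ∀ i ∈ I, f i ⊆ E) (hc : ∀ i ∈ I, a * E.card ≤ (f i).card) (k : ℕ) :
    ∃ T ⊆ E, T.card ≤ k ∧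
      ((I.filter fun i => Disjoint T (f i)).card : ℝ) ≤ I.card * (1 - a) ^ k := by
  induction k with
  | zero =>
    refine ⟨∅, by simp, by simp, ?_⟩
    simp
  | succ k ih =>
    obtain ⟨T, hT, hTk, hb⟩ := ih
    obtain ⟨J, hJ⟩ : ∃ J, J = I.filter fun i => Disjoint T (f i) := ⟨_, rfl⟩
    rw [← hJ] at hb
    have hdc : ∑ e ∈ E, ((J.filter fun i => e ∈ f i).card : ℝ) = ∑ i ∈ J, ((f i).card : ℝ) := by
      have h1 : ∀ e, ((J.filter fun i => e ∈ f i).card : ℝ) = ∑ i ∈ J, if e ∈ f i then 1 else 0 := by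
        intro e; rw [sum_boole]
      rw [sum_congr rfl fun e _ => h1 e, sum_comm]
      refine sum_congr rfl fun i hi => ?_
      rw [sum_boole]
      congr 2
      have := hf i (mem_filter.1 (hJ ▸ hi)).1
      ext e; rw [mem_filter]
      exact ⟨fun h => h.2, fun h => ⟨this h, h⟩⟩
    have hlow : ∑ e ∈ E, a * J.card ≤ ∑ e ∈ E, ((J.filter fun i => e ∈ f i).card : ℝ) := by
      rw [hdc, sum_const, nsmul_eq_mul]
      calc (E.card : ℝ) * (a * J.card) = ∑ i ∈ J, a * E.card := by
            rw [sum_const, nsmul_eq_mul]; ring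
        _ ≤ _ := sum_le_sum fun i hi => hc i (mem_filter.1 (hJ ▸ hi)).1
    obtain ⟨e, he, hle⟩ := exists_le_of_sum_le hE hlow
    refine ⟨insert e T, insert_subset he hT, (card_insert_le _ _).trans (by omega), ?_⟩
    have hsub : (I.filter fun i => Disjoint (insert e T) (f i)) = J.filter fun i => ¬ e ∈ f i := by
      rw [hJ, filter_filter]
      refine filter_congr fun i _ => ?_
      rw [disjoint_insert_left]; tauto
    have hs := card_filter_add_card_filter_not (s := J) (fun i => e ∈ f i)
    have hs' : ((J.filter fun i => e ∈ f i).card : ℝ) + (J.filter fun i => ¬ e ∈ f i).card = J.card := by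
      exact_mod_cast hs
    rw [hsub, pow_succ]
    nlinarith


noncomputable def DD {n : ℕ} (G : SimpleGraph (Fin n)) (L : ℝ) : Finset (Fin n) :=
  univ.filter fun v => (G.degree v : ℝ) < 0.1 * L

noncomputable def ND {n : ℕ} (G : SimpleGraph (Fin n)) (L : ℝ) : Finset (Fin n) :=
  univ.filter fun w => ∃ d ∈ DD G L, w = d ∨ G.Adj d w

lemma mem_DD {n : ℕ} {G : SimpleGraph (Fin n)} {L : ℝ} {v : Fin n} :
    v ∈ DD G L ↔ (G.degree v : ℝ) < 0.1 * L := by simp [DD]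

lemma mem_ND {n : ℕ} {G : SimpleGraph (Fin n)} {L : ℝ} {w : Fin n} :
    w ∈ ND G L ↔ ∃ d ∈ DD G L, w = d ∨ G.Adj d w := by simp [ND]

lemma mem_extN {V : Type*} [Fintype V] (G : SimpleGraph V) (U : Finset V) (w : V) :
    w ∈ extNbhd G U ↔ w ∉ U ∧ ∃ u ∈ U, G.Adj u w := by
  unfold extNbhd; rw [mem_filter]; simp

lemma walk2 {n : ℕ} {G : SimpleGraph (Fin n)} {v w d : Fin n} (h : G.Adj v w)
    (hd : w = d ∨ G.Adj d w) : ∃ q : G.Walk v d, q.length ≤ 2 := by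
  rcases hd with rfl | hd
  · exact ⟨Walk.cons h Walk.nil, by simp⟩
  · exact ⟨Walk.cons h (Walk.cons hd.symm Walk.nil), by simp⟩

lemma bad_nbrs {n : ℕ} {G : SimpleGraph (Fin n)} {L σ : ℝ} (hG : Good n L σ G) {v : Fin n}
    (hv : v ∉ DD G L) : (univ.filter fun w => G.Adj v w ∧ w ∈ ND G L).card ≤ 3 := by
  rcases (univ.filter fun w => G.Adj v w ∧ w ∈ ND G L).eq_empty_or_nonempty with h | ⟨w, hw⟩
  · rw [h]; simp
  · rw [mem_filter, mem_ND] at hw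
    obtain ⟨-, hvw, d, hd, hwd⟩ := hw
    have hvd : v ≠ d := fun h => hv (h ▸ hd)
    have hsub : (univ.filter fun w => G.Adj v w ∧ w ∈ ND G L) ⊆
        insert d (univ.filter fun x => G.Adj v x ∧ G.Adj d x) := by
      intro w' hw'
      rw [mem_filter, mem_ND] at hw'
      obtain ⟨-, hvw', d', hd', hwd'⟩ := hw'
      obtain ⟨q, hq⟩ := walk2 hvw hwd
      obtain ⟨q', hq'⟩ := walk2 hvw' hwd'
      have : d = d' := sep hG (mem_DD.1 hd) (mem_DD.1 hd') (q.reverse.append q')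
        (by rw [Walk.length_append, Walk.length_reverse]; omega)
      subst this
      rw [mem_insert, mem_filter]
      rcases hwd' with h | h
      · exact Or.inl h
      · exact Or.inr ⟨mem_univ _, hvw', h⟩
    have h2 := codeg hG hvd
    have h3 := card_le_card hsub
    have h4 := card_insert_le d (univ.filter fun x => G.Adj v x ∧ G.Adj d x)
    omega

lemma picks {n : ℕ} {G G' : SimpleGraph (Fin n)} {L σ : ℝ} (hG : Good n L σ G) (hle : G' ≤ G)
    (h2 : ∀ v, 2 ≤ G'.degree v) (hdeg : ∀ v, v ∉ DD G L → 0.09 * L ≤ G'.degree v) (K : ℕ)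
    (hK : (K : ℝ) + 3 ≤ 0.09 * L) :
    ∃ pick : Fin n → Finset (Fin n), (∀ v, ∀ w ∈ pick v, G'.Adj v w) ∧
      (∀ v, v ∉ DD G L → (pick v).card = K ∧ ∀ w ∈ pick v, w ∉ ND G L) ∧
      (∀ v ∈ DD G L, (pick v).card = 2) := by
  have : ∀ v, ∃ P : Finset (Fin n), (∀ w ∈ P, G'.Adj v w) ∧
      (v ∉ DD G L → P.card = K ∧ ∀ w ∈ P, w ∉ ND G L) ∧ (v ∈ DD G L → P.card = 2) := by
    intro v
    by_cases hv : v ∈ DD G L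
    · obtain ⟨P, hP, hc⟩ := exists_subset_card_eq (s := G'.neighborFinset v) (n := 2)
        (by rw [card_neighborFinset_eq_degree]; exact h2 v)
      exact ⟨P, fun w hw => by simpa using hP hw, fun h => absurd hv h, fun _ => hc⟩
    · have hb := bad_nbrs hG hv
      have hd : K + 3 ≤ G'.degree v := by
        have := hdeg v hv
        have : ((K + 3 : ℕ) : ℝ) ≤ G'.degree v := by push_cast; linarith
        exact_mod_cast this
      have hc : K ≤ (G'.neighborFinset v \ (univ.filter fun w => G.Adj v w ∧ w ∈ ND G L)).card := by
        have := le_card_sdiff (univ.filter fun w => G.Adj v w ∧ w ∈ ND G L) (G'.neighborFinset v)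
        rw [card_neighborFinset_eq_degree] at this
        omega
      obtain ⟨P, hP, hc⟩ := exists_subset_card_eq hc
      have h1 : ∀ w ∈ P, G'.Adj v w ∧ w ∉ ND G L := by
        intro w hw
        have := hP hw
        rw [Finset.mem_sdiff, mem_neighborFinset, mem_filter] at this
        exact ⟨this.1, fun h => this.2 ⟨mem_univ _, hle this.1, h⟩⟩
      exact ⟨P, fun w hw => (h1 w hw).1, fun _ => ⟨hc, fun w hw => (h1 w hw).2⟩,
        fun h => absurd h hv⟩
  choose pick hp using this
  exact ⟨pick, fun v => (hp v).1, fun v => (hp v).2.1, fun v => (hp v).2.2⟩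

lemma fiber_le {n : ℕ} (U : Finset (Fin n)) (pick : Fin n → Finset (Fin n)) (E : Finset (Sym2 (Fin n)))
    (h : ∀ v ∈ U, ∀ w ∈ pick v, s(v, w) ∈ E) : ∑ v ∈ U, (pick v).card ≤ 2 * E.card := by
  rw [← card_sigma]
  have := card_le_mul_card_image_of_maps_to (s := U.sigma pick) (t := E) (f := fun x => s(x.1, x.2))
    (by rintro ⟨v, w⟩ hx; rw [mem_sigma] at hx; exact h v hx.1 w hx.2) 2 ?_
  · exact this
  · intro e _
    induction e with
    | _ a b =>
    refine (card_le_card (t := {⟨a, b⟩, ⟨b, a⟩}) ?_).trans card_le_two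
    rintro ⟨v, w⟩ hx
    rw [mem_filter] at hx
    have := hx.2
    simp only [Sym2.eq_iff] at this
    rcases this with ⟨rfl, rfl⟩ | ⟨rfl, rfl⟩ <;> simp

lemma exp_small {n : ℕ} {G G' Γ : SimpleGraph (Fin n)} {L σ : ℝ} (hG : Good n L σ G) (hle : G' ≤ G)
    (K : ℕ) (hK : 0.0005 * L ≤ K) (pick : Fin n → Finset (Fin n)) (hL : 0 < L)
    (hp1 : ∀ v, ∀ w ∈ pick v, G'.Adj v w)
    (hp2 : ∀ v, v ∉ DD G L → (pick v).card = K ∧ ∀ w ∈ pick v, w ∉ ND G L)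
    (hp3 : ∀ v ∈ DD G L, (pick v).card = 2)
    (hΓ : ∀ v, ∀ w ∈ pick v, Γ.Adj v w) (U : Finset (Fin n)) (hU : (U.card : ℝ) ≤ σ / 4 * n) :
    2 * U.card ≤ (extNbhd Γ U).card := by
  obtain ⟨U1, hU1⟩ : ∃ U1, U1 = U \ DD G L := ⟨_, rfl⟩
  obtain ⟨U2, hU2⟩ : ∃ U2, U2 = U ∩ DD G L := ⟨_, rfl⟩
  have m1 : ∀ v ∈ U1, v ∈ U ∧ v ∉ DD G L := fun v hv => by
    rw [hU1, Finset.mem_sdiff] at hv; exact hv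
  have m2 : ∀ v ∈ U2, v ∈ U ∧ v ∈ DD G L := fun v hv => by
    rw [hU2, mem_inter] at hv; exact hv
  have hcU : U1.card + U2.card = U.card := by
    rw [hU1, hU2]; exact card_sdiff_add_card_inter U (DD G L)
  have hDN : ∀ v ∈ DD G L, v ∈ ND G L := fun v hv => mem_ND.2 ⟨v, hv, Or.inl rfl⟩
  obtain ⟨A, hA⟩ : ∃ A, A = (U1.biUnion pick) \ U1 := ⟨_, rfl⟩
  have mA : ∀ w ∈ A, (∃ v ∈ U1, w ∈ pick v) ∧ w ∉ U1 := fun w hw => by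
    rw [hA, Finset.mem_sdiff, mem_biUnion] at hw; exact hw
  have hA3 : 3 * U1.card ≤ A.card := by
    by_contra hlt
    have hne : U1.Nonempty := by
      rw [nonempty_iff_ne_empty]; rintro rfl; simp at hlt
    have hS : (U1 ∪ A).card < 4 * U1.card := by
      have := card_union_le U1 A; omega
    have hSr : ((U1 ∪ A).card : ℝ) < 4 * U1.card := by exact_mod_cast hS
    have hU1U : (U1.card : ℝ) ≤ U.card := by exact_mod_cast (by omega : U1.card ≤ U.card)
    have h3 := hG.h3 (U1 ∪ A) (hne.mono subset_union_left) (by linarith)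
    have h4 := fiber_le U1 pick (inE G (U1 ∪ A)) (by
      intro v hv w hw
      rw [mem_inE]
      refine ⟨hle (hp1 v w hw), ?_⟩
      intro x hx
      rw [Sym2.mem_iff] at hx
      rw [mem_union]
      rcases hx with rfl | rfl
      · exact Or.inl hv
      · by_cases h : x ∈ U1
        · exact Or.inl h
        · right; rw [hA, Finset.mem_sdiff, mem_biUnion]; exact ⟨⟨v, hv, hw⟩, h⟩)
    rw [sum_congr rfl fun v hv => (hp2 v (m1 v hv).2).1, sum_const, smul_eq_mul, ← eIn_eq] at h4
    have h4' : (U1.card : ℝ) * K ≤ 2 * eIn G (U1 ∪ A) := by exact_mod_cast h4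
    have h5 : (U1.card : ℝ) * (0.0005 * L) ≤ U1.card * K := by gcongr
    have h6 : L * ((U1 ∪ A).card : ℝ) ≤ L * (4 * U1.card) := by gcongr
    linarith
  obtain ⟨B, hB⟩ : ∃ B, B = U2.biUnion pick := ⟨_, rfl⟩
  have mB : ∀ w ∈ B, ∃ v ∈ U2, w ∈ pick v := fun w hw => by
    rw [hB, mem_biUnion] at hw; exact hw
  have hBc : B.card = 2 * U2.card := by
    rw [hB, card_biUnion, sum_congr rfl fun v hv => hp3 v (m2 v hv).2, sum_const, smul_eq_mul, mul_comm]
    intro x hx y hy hxy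
    refine Finset.disjoint_left.2 ?_
    intro w hwx hwy
    exact hxy (sep hG (mem_DD.1 (m2 x hx).2) (mem_DD.1 (m2 y hy).2)
      (Walk.cons (hle (hp1 x w hwx)) (Walk.cons (hle (hp1 y w hwy)).symm Walk.nil)) (by simp))
  have hBD : ∀ w ∈ B, w ∉ DD G L := by
    intro w hw hwD
    obtain ⟨v, hv, hwv⟩ := mB w hw
    have hadj := hle (hp1 v w hwv)
    exact hadj.ne (sep hG (mem_DD.1 (m2 v hv).2) (mem_DD.1 hwD) (Walk.cons hadj Walk.nil) (by simp))
  have hBN : ∀ w ∈ B, w ∈ ND G L := by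
    intro w hw
    obtain ⟨v, hv, hwv⟩ := mB w hw
    exact mem_ND.2 ⟨v, (m2 v hv).2, Or.inr (hle (hp1 v w hwv))⟩
  have hAN : ∀ w ∈ A, w ∉ ND G L := by
    intro w hw
    obtain ⟨⟨v, hv, hwv⟩, -⟩ := mA w hw
    exact (hp2 v (m1 v hv).2).2 w hwv
  have hdis : Disjoint A (B \ U1) := by
    rw [Finset.disjoint_left]
    intro w hw hw'
    exact hAN w hw (hBN w (Finset.mem_sdiff.1 hw').1)
  have hsub : A ∪ (B \ U1) ⊆ extNbhd Γ U := by
    intro w hw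
    rw [mem_extN]
    rw [mem_union, Finset.mem_sdiff] at hw
    rcases hw with hw | ⟨hw, hw1⟩
    · obtain ⟨⟨v, hv, hwv⟩, hw1⟩ := mA w hw
      refine ⟨fun hwU => ?_, v, (m1 v hv).1, hΓ v w hwv⟩
      have : w ∉ DD G L := fun h => hAN w hw (hDN w h)
      exact hw1 (by rw [hU1, Finset.mem_sdiff]; exact ⟨hwU, this⟩)
    · obtain ⟨v, hv, hwv⟩ := mB w hw
      refine ⟨fun hwU => ?_, v, (m2 v hv).1, hΓ v w hwv⟩
      exact hw1 (by rw [hU1, Finset.mem_sdiff]; exact ⟨hwU, hBD w hw⟩)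
  have h1 := card_le_card hsub
  rw [card_union_of_disjoint hdis] at h1
  have h2 := le_card_sdiff U1 B
  omega

lemma exp_large {n : ℕ} {Γ : SimpleGraph (Fin n)} {σ : ℝ}
    (hT : ∀ U W : Finset (Fin n), Disjoint U W → σ / 4 * n ≤ U.card → (n : ℝ) / 4 ≤ W.card →
      ∃ u ∈ U, ∃ w ∈ W, Γ.Adj u w) (U : Finset (Fin n)) (hU : σ / 4 * n ≤ U.card)
    (hU4 : 4 * U.card ≤ n) : 2 * U.card ≤ (extNbhd Γ U).card := by
  by_contra hlt
  obtain ⟨W, hW⟩ : ∃ W, W = univ \ (U ∪ extNbhd Γ U) := ⟨_, rfl⟩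
  have mW : ∀ w, w ∈ W ↔ w ∉ U ∧ w ∉ extNbhd Γ U := fun w => by
    rw [hW, Finset.mem_sdiff, mem_union]; simp
  have hc : n ≤ W.card + 3 * U.card := by
    have h1 := le_card_sdiff (U ∪ extNbhd Γ U) univ
    rw [← hW, card_univ, Fintype.card_fin] at h1
    have := card_union_le U (extNbhd Γ U)
    omega
  have hc' : n ≤ 4 * W.card := by omega
  have hc'' : (n : ℝ) ≤ 4 * W.card := by exact_mod_cast hc'
  obtain ⟨u, hu, w, hw, hadj⟩ := hT U W (Finset.disjoint_left.2 fun x hx hx' => ((mW x).1 hx').1 hx)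
    hU (by linarith)
  refine ((mW w).1 hw).2 ?_
  rw [mem_extN]
  exact ⟨((mW w).1 hw).1, u, hu, hadj⟩


noncomputable def btP {V : Type*} [Fintype V] (G : SimpleGraph V) (U Z : Finset V) : Finset (V × V) :=
  (U ×ˢ Z).filter (fun q => G.Adj q.1 q.2)

lemma eBetween_eq {V : Type*} [Fintype V] (G : SimpleGraph V) (U Z : Finset V) :
    eBetween G U Z = (btP G U Z).card := rfl

lemma mem_btP {V : Type*} [Fintype V] (G : SimpleGraph V) (U Z : Finset V) (q : V × V) :
    q ∈ btP G U Z ↔ (q.1 ∈ U ∧ q.2 ∈ Z) ∧ G.Adj q.1 q.2 := by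
  unfold btP; rw [mem_filter, mem_product]

lemma eBetween_sdiff {n : ℕ} (G H : SimpleGraph (Fin n)) (U W : Finset (Fin n)) :
    eBetween G U W ≤ eBetween (G \ H) U W + ∑ u ∈ U, H.degree u := by
  rw [eBetween_eq, eBetween_eq]
  have h1 : btP G U W ⊆ btP (G \ H) U W ∪ btP H U W := by
    intro q hq
    rw [mem_union, mem_btP, mem_btP, SimpleGraph.sdiff_adj]
    rw [mem_btP] at hq
    tauto
  have h2 : (btP H U W).card ≤ ∑ u ∈ U, H.degree u := by
    rw [sum_congr rfl fun u _ => (card_neighborFinset_eq_degree H u).symm, ← card_sigma]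
    refine card_le_card_of_injOn (fun q => ⟨q.1, q.2⟩) ?_ ?_
    · intro q hq
      have hq := (mem_btP _ _ _ _).1 (mem_coe.1 hq)
      rw [mem_coe, mem_sigma]
      exact ⟨hq.1.1, by simpa using hq.2⟩
    · rintro ⟨a, b⟩ _ ⟨c, d⟩ _ h
      simpa using h
  exact (card_le_card h1).trans ((card_union_le _ _).trans (by omega))

/-- edge set between two sets -/
noncomputable def btE {n : ℕ} (G : SimpleGraph (Fin n)) (U Z : Finset (Fin n)) : Finset (Sym2 (Fin n)) :=
  (btP G U Z).image (fun q => s(q.1, q.2))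

lemma card_btE {n : ℕ} (G : SimpleGraph (Fin n)) (U Z : Finset (Fin n)) (hd : Disjoint U Z) :
    (btE G U Z).card = eBetween G U Z := by
  unfold btE
  rw [eBetween_eq]
  refine card_image_of_injOn ?_
  rintro ⟨a, b⟩ h1 ⟨c, d⟩ h2 h
  have h1 := (mem_btP _ _ _ _).1 (mem_coe.1 h1)
  have h2 := (mem_btP _ _ _ _).1 (mem_coe.1 h2)
  simp only [Sym2.eq_iff] at h
  rcases h with ⟨rfl, rfl⟩ | ⟨rfl, rfl⟩
  · rfl
  · exact absurd h2.1.2 (fun h => Finset.disjoint_left.1 hd h1.1.1 h)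

lemma btE_sub {n : ℕ} (G : SimpleGraph (Fin n)) (U Z : Finset (Fin n)) : btE G U Z ⊆ G.edgeFinset := by
  intro e he
  unfold btE at he
  rw [mem_image] at he
  obtain ⟨q, hq, rfl⟩ := he
  rw [mem_edgeFinset]
  exact ((mem_btP _ _ _ _).1 hq).2

lemma hitT {n : ℕ} {G H G' : SimpleGraph (Fin n)} {L σ : ℝ} (hG : Good n L σ G) (hG' : G' = G \ H)
    (hσ : 0 < σ) (hσ1 : σ ≤ 1) (hL : 0 < L) (hn : 0 < n)
    (hH : ∀ v, (H.degree v : ℝ) ≤ 0.01 * L) (hne : G'.edgeFinset.Nonempty) :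
    ∃ T ⊆ G'.edgeFinset, (T.card : ℝ) ≤ 160 / σ * n + 1 ∧
      ∀ U W : Finset (Fin n), Disjoint U W → σ / 4 * n ≤ U.card → (n : ℝ) / 4 ≤ W.card →
      ∃ u ∈ U, ∃ w ∈ W, s(u, w) ∈ T := by
  have hn' : (1 : ℝ) ≤ n := by exact_mod_cast hn
  obtain ⟨I, hI⟩ : ∃ I : Finset (Finset (Fin n) × Finset (Fin n)), I = univ.filter fun x =>
    Disjoint x.1 x.2 ∧ σ / 4 * n ≤ x.1.card ∧ (n : ℝ) / 4 ≤ x.2.card := ⟨_, rfl⟩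
  have mI : ∀ x, x ∈ I ↔ Disjoint x.1 x.2 ∧ σ / 4 * n ≤ x.1.card ∧ (n : ℝ) / 4 ≤ x.2.card :=
    fun x => by rw [hI, mem_filter]; simp
  obtain ⟨T, hT, hTk, hb⟩ := hitting I G'.edgeFinset (fun x => btE G' x.1 x.2) (σ / 80)
    (by linarith) hne (fun i _ => btE_sub _ _ _) (by
      intro x hx
      obtain ⟨h1, h2, h3⟩ := (mI x).1 hx
      rw [card_btE _ _ _ h1]
      have h4 := hG.h6 x.1 x.2 h1 h2 h3
      have h5 : (eBetween G x.1 x.2 : ℝ) ≤ eBetween G' x.1 x.2 + ∑ u ∈ x.1, (H.degree u : ℝ) := by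
        rw [hG']; exact_mod_cast eBetween_sdiff G H x.1 x.2
      have h6 : ∑ u ∈ x.1, (H.degree u : ℝ) ≤ x.1.card * (0.01 * L) := by
        refine (sum_le_sum fun u _ => hH u).trans ?_
        rw [sum_const, nsmul_eq_mul]
      have h7 : (G'.edgeFinset.card : ℝ) ≤ n * L := by
        refine le_trans ?_ hG.h7
        exact_mod_cast card_le_card (edgeFinset_subset_edgeFinset.2 (hG' ▸ sdiff_le : G' ≤ G))
      have h8 : σ / 4 * n * L ≤ x.1.card * L := by gcongr
      have h9 : σ / 80 * (G'.edgeFinset.card : ℝ) ≤ σ / 80 * (n * L) := by gcongr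
      nlinarith [mul_nonneg (Nat.cast_nonneg (α := ℝ) x.1.card) hL.le]) ⌈160 / σ * n⌉₊
  refine ⟨T, hT, ?_, ?_⟩
  · have h1 : (T.card : ℝ) ≤ ⌈160 / σ * n⌉₊ := by exact_mod_cast hTk
    have h2 := Nat.ceil_lt_add_one (show 0 ≤ 160 / σ * n by positivity)
    linarith
  · intro U W hd hU hW
    by_contra hcon
    have hmem : (U, W) ∈ I.filter fun i => Disjoint T (btE G' i.1 i.2) := by
      rw [mem_filter]
      refine ⟨(mI _).2 ⟨hd, hU, hW⟩, ?_⟩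
      rw [Finset.disjoint_left]
      intro e he he'
      unfold btE at he'
      rw [mem_image] at he'
      obtain ⟨q, hq, rfl⟩ := he'
      have := (mem_btP _ _ _ _).1 hq
      exact hcon ⟨q.1, this.1.1, q.2, this.1.2, he⟩
    have h1 : (1 : ℝ) ≤ (I.filter fun i => Disjoint T (btE G' i.1 i.2)).card := by
      exact_mod_cast card_pos.2 ⟨_, hmem⟩
    have hIc : (I.card : ℝ) ≤ 4 ^ n := by
      have : I.card ≤ 4 ^ n := by
        refine (card_le_univ I).trans ?_
        rw [Fintype.card_prod, Fintype.card_finset, Fintype.card_fin, ← mul_pow]; norm_num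
      exact_mod_cast this
    have hk : 160 / σ * n ≤ ⌈160 / σ * n⌉₊ := Nat.le_ceil _
    have hpow : (1 - σ / 80) ^ ⌈160 / σ * n⌉₊ ≤ (Real.exp (-2)) ^ n := by
      calc (1 - σ / 80) ^ ⌈160 / σ * n⌉₊ ≤ (Real.exp (-(σ / 80))) ^ ⌈160 / σ * n⌉₊ := by
            apply pow_le_pow_left₀ (by linarith)
            have := Real.add_one_le_exp (-(σ / 80)); linarith
        _ = Real.exp (⌈160 / σ * n⌉₊ * (-(σ / 80))) := (Real.exp_nat_mul _ _).symm
        _ ≤ Real.exp (n * (-2)) := by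
            apply Real.exp_le_exp.2
            have : 160 / σ * n * (σ / 80) ≤ ⌈160 / σ * n⌉₊ * (σ / 80) := by gcongr
            have h : 160 / σ * n * (σ / 80) = 2 * n := by field_simp; norm_num
            linarith
        _ = _ := Real.exp_nat_mul _ _
    have he : 4 * Real.exp (-2) < 1 := by
      have h1 : Real.exp (-2) = (Real.exp 1)⁻¹ ^ 2 := by
        rw [← Real.exp_neg, ← Real.exp_nat_mul]; norm_num
      have h2 := Real.exp_one_gt_d9
      have h3 : (Real.exp 1)⁻¹ < (2.7 : ℝ)⁻¹ := by
        apply inv_strictAnti₀ <;> linarith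
      have h4 : 0 < (Real.exp 1)⁻¹ := by positivity
      rw [h1]
      have : (Real.exp 1)⁻¹ ^ 2 < (2.7 : ℝ)⁻¹ ^ 2 := by gcongr
      norm_num at this ⊢
      linarith
    have hlt : (4 : ℝ) ^ n * (Real.exp (-2)) ^ n < 1 := by
      rw [← mul_pow]
      exact pow_lt_one₀ (by positivity) he (by omega)
    have : (I.card : ℝ) * (1 - σ / 80) ^ ⌈160 / σ * n⌉₊ ≤ 4 ^ n * (Real.exp (-2)) ^ n := by
      apply mul_le_mul hIc hpow (pow_nonneg (by linarith) _) (by positivity)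
    linarith

lemma card_edge_fromEdgeSet {n : ℕ} (E : Finset (Sym2 (Fin n))) (Γ : SimpleGraph (Fin n))
    (h : Γ = fromEdgeSet (E : Set (Sym2 (Fin n)))) : Γ.edgeFinset.card ≤ E.card := by
  apply card_le_card
  intro e he
  rw [mem_edgeFinset, h, edgeSet_fromEdgeSet] at he
  exact he.1

theorem part1 {n : ℕ} {G H : SimpleGraph (Fin n)} {L σ : ℝ} (hG : Good n L σ G)
    (hσ : 0 < σ) (hσ1 : σ ≤ 1) (hL : 20000 + 320000 / σ ≤ L) (hn : 100 ≤ n)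
    (hH : ∀ v w, H.degree v + 2 ≤ G.degree w) : (G \ H).IsHamiltonian := by
  have hL0 : 20000 ≤ L := by
    have : 0 < 320000 / σ := by positivity
    linarith
  have hn' : (100 : ℝ) ≤ n := by exact_mod_cast hn
  obtain ⟨v0, hv0⟩ := hG.h2
  have hHd : ∀ v, (H.degree v : ℝ) ≤ 0.01 * L := fun v => by
    have : (H.degree v : ℝ) + 2 ≤ G.degree v0 := by exact_mod_cast hH v v0
    linarith
  obtain ⟨G', hG'⟩ : ∃ G', G' = G \ H := ⟨_, rfl⟩
  have hdd : ∀ v, G.degree v ≤ G'.degree v + H.degree v := by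
    intro v
    rw [← card_neighborFinset_eq_degree, ← card_neighborFinset_eq_degree,
      ← card_neighborFinset_eq_degree]
    refine (card_le_card ?_).trans (card_union_le _ _)
    intro w hw
    rw [mem_union, mem_neighborFinset, mem_neighborFinset, hG', SimpleGraph.sdiff_adj]
    rw [mem_neighborFinset] at hw
    tauto
  have hle : G' ≤ G := by rw [hG']; exact sdiff_le
  have h2 : ∀ v, 2 ≤ G'.degree v := fun v => by
    have := hdd v; have := hH v v; omega
  have hdeg : ∀ v, v ∉ DD G L → 0.09 * L ≤ G'.degree v := by
    intro v hv
    rw [mem_DD, not_lt] at hv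
    have h1 : (G.degree v : ℝ) ≤ G'.degree v + H.degree v := by
      exact_mod_cast hdd v
    have := hHd v
    linarith
  have hK1 : 0.0005 * L ≤ ⌈0.0005 * L⌉₊ := Nat.le_ceil _
  have hK2 := Nat.ceil_lt_add_one (show 0 ≤ 0.0005 * L by linarith)
  obtain ⟨K, hK⟩ : ∃ K, K = ⌈0.0005 * L⌉₊ := ⟨_, rfl⟩
  rw [← hK] at hK1 hK2
  obtain ⟨pick, hp1, hp2, hp3⟩ := picks hG hle h2 hdeg K (by linarith)
  have hne : G'.edgeFinset.Nonempty := by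
    obtain ⟨w, hw⟩ := (G'.degree_pos_iff_exists_adj v0).1 (by have := h2 v0; omega)
    exact ⟨s(v0, w), by rw [mem_edgeFinset]; exact hw⟩
  obtain ⟨T, hT1, hT2, hT3⟩ := hitT hG hG' hσ hσ1 (by linarith) (by omega) hHd hne
  obtain ⟨E0, hE0⟩ : ∃ E0, E0 = (univ.biUnion fun v => (pick v).image fun w => s(v, w)) ∪ T := ⟨_, rfl⟩
  have hE0G : E0 ⊆ G'.edgeFinset := by
    rw [hE0]
    refine union_subset ?_ hT1
    intro e he
    simp only [mem_biUnion, mem_image] at he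
    obtain ⟨v, -, w, hw, rfl⟩ := he
    rw [mem_edgeFinset]; exact hp1 v w hw
  have hE0c : (E0.card : ℝ) ≤ n * (0.0005 * L + 3) + (160 / σ * n + 1) := by
    have h1 : E0.card ≤ n * (K + 2) + T.card := by
      rw [hE0]
      refine (card_union_le _ _).trans ?_
      gcongr
      refine (card_biUnion_le_card_mul _ _ (K + 2) ?_).trans (by simp)
      intro v _
      refine card_image_le.trans ?_
      by_cases hv : v ∈ DD G L
      · rw [hp3 v hv]; omega
      · rw [(hp2 v hv).1]; omega
    have h1' : (E0.card : ℝ) ≤ n * (K + 2) + T.card := by exact_mod_cast h1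
    have : (n : ℝ) * (K + 2) ≤ n * (0.0005 * L + 3) := by gcongr ?_ * ?_; linarith
    linarith
  obtain ⟨Γ0, hΓ0⟩ : ∃ Γ0, Γ0 = fromEdgeSet (E0 : Set (Sym2 (Fin n))) := ⟨_, rfl⟩
  have hadj : ∀ v w, s(v, w) ∈ E0 → Γ0.Adj v w := by
    intro v w h
    rw [hΓ0, fromEdgeSet_adj]
    refine ⟨h, ?_⟩
    have := hE0G h
    rw [mem_edgeFinset] at this
    exact G'.ne_of_adj this
  have hΓle : Γ0 ≤ G' := by
    intro v w h
    rw [hΓ0, fromEdgeSet_adj] at h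
    have := hE0G h.1
    rwa [mem_edgeFinset] at this
  have hc0 : Γ0.edgeFinset.card ≤ E0.card := card_edge_fromEdgeSet E0 Γ0 hΓ0
  have hexp : Exp2 Γ0 (n / 4) := by
    intro U hU
    by_cases hs : (U.card : ℝ) ≤ σ / 4 * n
    · refine exp_small hG hle K hK1 pick (by linarith) hp1 hp2 hp3 ?_ U hs
      intro v w hw
      apply hadj
      rw [hE0, mem_union]
      left
      simp only [mem_biUnion, mem_image]
      exact ⟨v, mem_univ _, w, hw, rfl⟩
    · refine exp_large (σ := σ) ?_ U (not_le.1 hs).le (by omega)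
      intro A B hd h1 h2
      obtain ⟨u, hu, w, hw, h⟩ := hT3 A B hd h1 h2
      exact ⟨u, hu, w, hw, hadj u w (by rw [hE0, mem_union]; exact Or.inr h)⟩
  rw [← hG']
  refine ham_of_boosters hΓle ?_
  intro Γ h1 h2 h3 h4
  have hb := many_boosters (hexp.mono h1) (by omega) (by omega) (by omega) h4
  have hb1 : (n : ℝ) ^ 2 / 32 ≤ (Boo Γ).card := by
    have h5 : n ≤ 4 * (n / 4 + 1) := by omega
    have h6 : n * n ≤ (4 * (n / 4 + 1)) * (4 * (n / 4 + 1)) := Nat.mul_le_mul h5 h5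
    have h7 : n * n ≤ 32 * (Boo Γ).card := by nlinarith
    have h8 : (n : ℝ) * n ≤ 32 * (Boo Γ).card := by exact_mod_cast h7
    nlinarith
  have hec : (Γ.edgeFinset.card : ℝ) ≤ 0.001 * n * L := by
    have h5 : (Γ.edgeFinset.card : ℝ) ≤ E0.card + n := by exact_mod_cast h3.trans (by omega)
    have h6 : (n : ℝ) * (20000 + 320000 / σ) ≤ n * L := by gcongr
    have h7 : (n : ℝ) * (320000 / σ) = 2000 * (160 / σ * n) := by ring
    nlinarith
  have h5 := hG.h8 Γ (h2.trans hle) hec hb1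
  by_contra hcon
  push Not at hcon
  have hsub : G.edgeFinset ∩ Boo Γ ⊆ H.edgeFinset := by
    intro e he
    rw [mem_inter] at he
    have h6 := hcon e he.2
    rw [mem_edgeFinset, hG', edgeSet_sdiff] at h6
    have h7 := he.1
    rw [mem_edgeFinset] at h7 ⊢
    by_contra h8
    exact h6 ⟨h7, h8⟩
  have h6 : ((G.edgeFinset ∩ Boo Γ).card : ℝ) ≤ H.edgeFinset.card := by exact_mod_cast card_le_card hsub
  have h7 := H.sum_degrees_eq_twice_card_edges
  have h8 : ∑ v, (H.degree v : ℝ) = 2 * H.edgeFinset.card := by exact_mod_cast h7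
  have h9 : ∑ v, (H.degree v : ℝ) ≤ n * (0.01 * L) := by
    refine (sum_le_sum fun u _ => hHd u).trans ?_
    rw [sum_const, nsmul_eq_mul, card_univ, Fintype.card_fin]
  linarith


lemma not_ham_of_deg {n : ℕ} {Γ : SimpleGraph (Fin n)} (hn : 2 ≤ n) (v : Fin n)
    (h : ∀ x y, Γ.Adj v x → Γ.Adj v y → x = y) : ¬ Γ.IsHamiltonian := by
  intro hH
  haveI : Nontrivial (Fin n) := Fin.nontrivial_iff_two_le.2 hn
  obtain ⟨q, hq⟩ := hH.exists_isHamiltonianCycle v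
  have h2 := hq.isCycle.ncard_neighborSet_toSubgraph_eq_two (hq.mem_support v)
  have h3 : (q.toSubgraph.neighborSet v).ncard ≤ 1 := by
    rw [Set.ncard_le_one (Set.toFinite _)]
    intro x hx y hy
    exact h x y (q.toSubgraph.adj_sub hx) (q.toSubgraph.adj_sub hy)
  omega

/-- star graph -/
def starG {n : ℕ} (v : Fin n) (A : Finset (Fin n)) : SimpleGraph (Fin n) :=
  SimpleGraph.fromRel (fun a b => a = v ∧ b ∈ A)

lemma part2 {n : ℕ} {G : SimpleGraph (Fin n)} (hn : 2 ≤ n) (v : Fin n) (hv : 2 ≤ G.degree v) :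
    ∃ H : SimpleGraph (Fin n), H ≤ G ∧ H.maxDegree = G.degree v - 1 ∧ ¬ (G \ H).IsHamiltonian := by
  obtain ⟨A, hA, hc⟩ := exists_subset_card_eq (s := G.neighborFinset v) (n := G.degree v - 1)
    (by rw [card_neighborFinset_eq_degree]; omega)
  have hAv : ∀ w ∈ A, G.Adj v w := fun w hw => by simpa using hA hw
  obtain ⟨H, hH⟩ : ∃ H, H = starG v A := ⟨_, rfl⟩
  have hadj : ∀ a b, H.Adj a b ↔ (a = v ∧ b ∈ A) ∨ (b = v ∧ a ∈ A) := by
    intro a b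
    rw [hH]; unfold starG
    rw [SimpleGraph.fromRel_adj]
    constructor
    · exact fun h => h.2
    · intro h
      refine ⟨?_, h⟩
      rcases h with ⟨rfl, h⟩ | ⟨rfl, h⟩
      · exact (hAv _ h).ne
      · exact (hAv _ h).ne'
  have hvA : v ∉ A := fun h => (hAv v h).ne rfl
  have hdv : H.degree v = A.card := by
    rw [← card_neighborFinset_eq_degree]
    congr 1
    ext w
    rw [mem_neighborFinset, hadj]
    tauto
  have hdw : ∀ w, w ≠ v → H.degree w ≤ 1 := by
    intro w hw
    rw [← card_neighborFinset_eq_degree, card_le_one]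
    intro x hx y hy
    rw [mem_neighborFinset, hadj] at hx hy
    rcases hx with hx | hx
    · exact absurd hx.1 hw
    · rcases hy with hy | hy
      · exact absurd hy.1 hw
      · rw [hx.1, hy.1]
  refine ⟨H, ?_, ?_, ?_⟩
  · intro a b h
    rcases (hadj a b).1 h with ⟨rfl, h⟩ | ⟨rfl, h⟩
    · exact hAv _ h
    · exact (hAv _ h).symm
  · apply le_antisymm
    · apply maxDegree_le_of_forall_degree_le
      intro w
      by_cases hw : w = v
      · rw [hw, hdv, hc]
      · have := hdw w hw; omega
    · have := H.degree_le_maxDegree v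
      omega
  · apply not_ham_of_deg hn v
    intro x y hx hy
    rw [SimpleGraph.sdiff_adj] at hx hy
    have h1 : (G.neighborFinset v \ A).card ≤ 1 := by
      rw [card_sdiff_of_subset hA, card_neighborFinset_eq_degree]; omega
    rw [card_le_one] at h1
    apply h1
    · rw [Finset.mem_sdiff, mem_neighborFinset]
      exact ⟨hx.1, fun h => hx.2 ((hadj v x).2 (Or.inl ⟨rfl, h⟩))⟩
    · rw [Finset.mem_sdiff, mem_neighborFinset]
      exact ⟨hy.1, fun h => hy.2 ((hadj v y).2 (Or.inl ⟨rfl, h⟩))⟩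

theorem det {n : ℕ} {G : SimpleGraph (Fin n)} {L σ : ℝ} (hG : Good n L σ G)
    (hσ : 0 < σ) (hσ1 : σ ≤ 1) (hL : 20000 + 320000 / σ ≤ L) (hn : 100 ≤ n) :
    ∀ hn : 0 < n,
      haveI : Nonempty (Fin n) := ⟨⟨0, hn⟩⟩
      ((∀ H : SimpleGraph (Fin n), H ≤ G → H.maxDegree ≤ G.minDegree - 2 →
          (G \ H).IsHamiltonian) ∧
        (∃ H : SimpleGraph (Fin n), H ≤ G ∧ H.maxDegree = G.minDegree - 1 ∧
          ¬ (G \ H).IsHamiltonian)) := by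
  intro hn0
  haveI : Nonempty (Fin n) := ⟨⟨0, hn0⟩⟩
  obtain ⟨v, hv⟩ := G.exists_minimal_degree_vertex
  have h2 : 2 ≤ G.minDegree := by rw [hv]; exact hG.h1 v
  constructor
  · intro H _ hH
    refine part1 hG hσ hσ1 hL hn ?_
    intro a b
    have h3 := H.degree_le_maxDegree a
    have h4 := G.minDegree_le_degree b
    omega
  · rw [hv]
    exact part2 (by omega) v (hG.h1 v)


/-! ### Probability bounds -/

structure PH (n : ℕ) (p L : ℝ) : Prop where
  hL : L = Real.log n
  hn : 100 ≤ n
  hL1 : 1000 ≤ L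
  hlo : L ≤ n * p
  hhi : n * p ≤ 1.02 * L
  hLn : 100 * L ^ 2 ≤ n

namespace PH

variable {n : ℕ} {p L : ℝ}

lemma n0 (h : PH n p L) : (100 : ℝ) ≤ n := by exact_mod_cast h.hn

lemma p0 (h : PH n p L) : 0 < p := by
  have h1 := h.n0; have h2 := h.hlo; have h3 := h.hL1
  by_contra hp
  nlinarith

lemma psmall (h : PH n p L) : p * L ≤ 0.02 := by
  have h1 := h.n0; have h2 := h.hhi; have h3 := h.hL1; have h4 := h.hLn
  have : n * (p * L) ≤ n * 0.02 := by nlinarith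
  exact le_of_mul_le_mul_left this (by linarith)

lemma p1 (h : PH n p L) : p ≤ 0.01 := by
  have h1 := h.psmall; have h2 := h.p0; have h3 := h.hL1
  nlinarith

lemma p1' (h : PH n p L) : p ≤ 1 := by have := h.p1; linarith

lemma expL (h : PH n p L) : Real.exp L = n := by
  rw [h.hL, Real.exp_log]; have := h.n0; linarith

lemma Ln (h : PH n p L) : L ≤ n := by
  have h1 := h.hLn; have h3 := h.hL1; nlinarith

end PH

lemma inter_inE {n : ℕ} (G : SimpleGraph (Fin n)) (S : Finset (Fin n)) :
    G.edgeFinset ∩ inE ⊤ S = inE G S := by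
  ext e
  rw [mem_inter, mem_inE, mem_inE, mem_edgeFinset]
  constructor
  · exact fun h => ⟨h.1, h.2.2⟩
  · exact fun h => ⟨h.1, edgeSet_subset_edgeSet.2 le_top h.1, h.2⟩

lemma inE_sub_EE {n : ℕ} (G : SimpleGraph (Fin n)) (S : Finset (Fin n)) : inE G S ⊆ EE n := by
  intro e he
  apply edge_sub_EE G
  rw [mem_edgeFinset]; exact ((mem_inE _ _ _).1 he).1

lemma card_inE_top {n : ℕ} (S : Finset (Fin n)) : (inE (⊤ : SimpleGraph (Fin n)) S).card = S.card.choose 2 := by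
  rw [← Sym2.card_image_offDiag]
  congr 1
  ext e
  rw [mem_inE, mem_image]
  induction e with | _ a b =>
  simp only [mem_edgeSet, top_adj, Sym2.mem_iff, forall_eq_or_imp, forall_eq, mem_offDiag, Prod.exists]
  constructor
  · exact fun h => ⟨a, b, ⟨h.2.1, h.2.2, h.1⟩, rfl⟩
  · rintro ⟨c, d, h, h'⟩
    have h' : s(c, d) = s(a, b) := h'
    rw [Sym2.eq_iff] at h'
    rcases h' with ⟨rfl, rfl⟩ | ⟨rfl, rfl⟩
    · exact ⟨h.2.2, h.1, h.2.1⟩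
    · exact ⟨h.2.2.symm, h.2.1, h.1⟩

lemma choose_two_le (s : ℕ) : (s.choose 2 : ℝ) ≤ s ^ 2 / 2 := by
  rw [Nat.cast_choose_two]; nlinarith [Nat.cast_nonneg (α := ℝ) s]

lemma inter_btE {n : ℕ} (G : SimpleGraph (Fin n)) (U W : Finset (Fin n)) :
    G.edgeFinset ∩ btE ⊤ U W = btE G U W := by
  ext e
  unfold btE
  rw [mem_inter, mem_edgeFinset, mem_image, mem_image]
  constructor
  · rintro ⟨h, q, hq, rfl⟩
    rw [mem_btP] at hq
    exact ⟨q, (mem_btP _ _ _ _).2 ⟨hq.1, h⟩, rfl⟩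
  · rintro ⟨q, hq, rfl⟩
    rw [mem_btP] at hq
    exact ⟨hq.2, q, (mem_btP _ _ _ _).2 ⟨hq.1, hq.2.ne⟩, rfl⟩

lemma btE_sub_EE {n : ℕ} (G : SimpleGraph (Fin n)) (U W : Finset (Fin n)) : btE G U W ⊆ EE n :=
  (btE_sub G U W).trans (edge_sub_EE G)

lemma card_btE_top {n : ℕ} (U W : Finset (Fin n)) (hd : Disjoint U W) :
    (btE ⊤ U W).card = U.card * W.card := by
  rw [card_btE _ _ _ hd, eBetween_eq, ← card_product]
  congr 1
  ext q
  rw [mem_btP, mem_product, top_adj]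
  constructor
  · exact fun h => h.1
  · exact fun h => ⟨h, fun h' => Finset.disjoint_left.1 hd h.1 (h' ▸ h.2)⟩

lemma eBetween_le_deg {n : ℕ} (H : SimpleGraph (Fin n)) (U W : Finset (Fin n)) :
    eBetween H U W ≤ ∑ u ∈ U, H.degree u := by
  rw [eBetween_eq, sum_congr rfl fun u _ => (card_neighborFinset_eq_degree H u).symm, ← card_sigma]
  refine card_le_card_of_injOn (fun q => ⟨q.1, q.2⟩) ?_ ?_
  · intro q hq
    have hq := (mem_btP _ _ _ _).1 (mem_coe.1 hq)
    rw [mem_coe, mem_sigma]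
    exact ⟨hq.1.1, by simpa using hq.2⟩
  · rintro ⟨a, b⟩ _ ⟨c, d⟩ _ h
    simpa using h

lemma eBetween_star {n : ℕ} (G : SimpleGraph (Fin n)) (v : Fin n) (B : Finset (Fin n)) :
    eBetween G {v} B = (B.filter fun w => G.Adj v w).card := by
  rw [eBetween_eq]
  symm
  refine card_bij (fun w _ => (v, w)) ?_ ?_ ?_
  · intro w hw
    rw [mem_filter] at hw
    rw [mem_btP]
    simpa using hw
  · intro a _ b _ h; simpa using h
  · rintro ⟨a, b⟩ h
    rw [mem_btP] at h
    simp only [mem_singleton] at h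
    obtain ⟨⟨rfl, h1⟩, h2⟩ := h
    exact ⟨b, mem_filter.2 ⟨h1, h2⟩, rfl⟩

lemma eBetween_star_univ {n : ℕ} (G : SimpleGraph (Fin n)) (v : Fin n) :
    eBetween G {v} (univ \ {v}) = G.degree v := by
  rw [eBetween_star, ← card_neighborFinset_eq_degree]
  congr 1
  ext w
  simp only [mem_filter, Finset.mem_sdiff, mem_univ, true_and, mem_singleton, mem_neighborFinset]
  exact ⟨fun h => h.2, fun h => ⟨h.ne', h⟩⟩

lemma exp_one_sub_bound : Real.exp 1 - 1 ≤ 1.72 := by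
  have := Real.exp_one_lt_d9; linarith

lemma exp_neg_one_le : Real.exp (-1) ≤ 0.37 := by
  rw [Real.exp_neg, inv_le_comm₀ (Real.exp_pos _) (by norm_num)]
  have := Real.exp_one_gt_d9; norm_num; linarith

lemma exp_neg_two_le : Real.exp (-2) ≤ 0.14 := by
  have h : Real.exp (-2) = Real.exp (-1) ^ 2 := by rw [← Real.exp_nat_mul]; norm_num
  have := exp_neg_one_le
  have := Real.exp_pos (-1)
  rw [h]; nlinarith

lemma exp_neg_four_le : Real.exp (-4) ≤ 0.0196 := by
  have h : Real.exp (-4) = Real.exp (-2) ^ 2 := by rw [← Real.exp_nat_mul]; norm_num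
  have := exp_neg_two_le
  have := Real.exp_pos (-2)
  rw [h]; nlinarith

lemma prob7 {n : ℕ} {p L : ℝ} (h : PH n p L) :
    gnpProb n p (fun G => ¬ ((G.edgeFinset.card : ℝ) ≤ n * L)) ≤ Real.exp (-(0.1 * L)) := by
  have hp0 := h.p0
  refine (master1 h.p0.le h.p1' (EE n) (subset_refl _) 1 (n * L) _ ?_).trans ?_
  · intro G hG
    rw [inter_eq_left.2 (edge_sub_EE G), one_mul]
    exact (not_le.1 hG).le
  · apply Real.exp_le_exp.2
    rw [card_EE]
    have h1 := choose_two_le n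
    have h2 := h.hhi; have h3 := h.hL1; have h4 := h.n0
    have h5 := exp_one_sub_bound
    have h6 : (n.choose 2 : ℝ) * (p * (Real.exp 1 - 1)) ≤ (n ^ 2 / 2) * (p * 1.72) := by
      gcongr
      have := Real.exp_one_gt_d9; nlinarith
    have h7 : (n : ℝ) ^ 2 / 2 * (p * 1.72) = n * (n * p) * 0.86 := by ring
    have h8 : (n : ℝ) * (n * p) ≤ n * (1.02 * L) := by gcongr
    have h9 : 100 * L ≤ n * L := by gcongr
    linarith

lemma exp2_ge_four : (4 : ℝ) ≤ Real.exp 2 := by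
  have h : Real.exp 2 = Real.exp 1 ^ 2 := by rw [← Real.exp_nat_mul]; norm_num
  have := Real.exp_one_gt_d9
  rw [h]; nlinarith

lemma prob6 {n : ℕ} {p L σ : ℝ} (h : PH n p L) (hσ : 0 < σ) (hLσ : 150 / σ ≤ L) :
    gnpProb n p (fun G => ¬ ∀ U W : Finset (Fin n), Disjoint U W → σ / 4 * n ≤ U.card →
      (n : ℝ) / 4 ≤ W.card → (U.card : ℝ) * L / 16 ≤ eBetween G U W) ≤ Real.exp (-L) := by
  have hp0 := h.p0
  have hL1 := h.hL1
  have hn0 := h.n0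
  obtain ⟨I, hI⟩ : ∃ I : Finset (Finset (Fin n) × Finset (Fin n)), I = univ.filter fun x =>
    Disjoint x.1 x.2 ∧ σ / 4 * n ≤ x.1.card ∧ (n : ℝ) / 4 ≤ x.2.card := ⟨_, rfl⟩
  have mI : ∀ x, x ∈ I ↔ Disjoint x.1 x.2 ∧ σ / 4 * n ≤ x.1.card ∧ (n : ℝ) / 4 ≤ x.2.card :=
    fun x => by rw [hI, mem_filter]; simp
  have h1 : gnpProb n p (fun G => ¬ ∀ U W : Finset (Fin n), Disjoint U W → σ / 4 * n ≤ U.card →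
      (n : ℝ) / 4 ≤ W.card → (U.card : ℝ) * L / 16 ≤ eBetween G U W) ≤
      ∑ x ∈ I, gnpProb n p (fun G => (eBetween G x.1 x.2 : ℝ) < (x.1.card : ℝ) * L / 16) := by
    refine le_trans (prob_mono h.p0.le h.p1' ?_) (prob_union h.p0.le h.p1' I _)
    intro G hG
    push Not at hG
    obtain ⟨U, W, a, b, c, d⟩ := hG
    exact ⟨(U, W), (mI _).2 ⟨a, b, c⟩, d⟩
  have h2 : ∀ x ∈ I, gnpProb n p (fun G => (eBetween G x.1 x.2 : ℝ) < (x.1.card : ℝ) * L / 16) ≤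
      Real.exp (-(3 * n)) := by
    intro x hx
    obtain ⟨a, b, c⟩ := (mI x).1 hx
    refine (master1 h.p0.le h.p1' (btE ⊤ x.1 x.2) (btE_sub_EE _ _ _) (-1)
      (-((x.1.card : ℝ) * L / 16)) _ ?_).trans ?_
    · intro G hG
      rw [inter_btE, card_btE _ _ _ a]
      linarith
    · apply Real.exp_le_exp.2
      rw [card_btE_top _ _ a]
      push_cast
      have h3 := exp_neg_one_le
      have h4 : (x.1.card : ℝ) * x.2.card * (p * (Real.exp (-1) - 1)) ≤
          -((x.1.card : ℝ) * (L / 4) * 0.63) := by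
        have h5 : L / 4 ≤ x.2.card * p := by
          have := h.hlo
          have : (n : ℝ) / 4 * p ≤ x.2.card * p := by gcongr
          linarith
        have h6 : (x.1.card : ℝ) * (L / 4) * 0.63 ≤ (x.1.card : ℝ) * (x.2.card * p) * (1 - Real.exp (-1)) := by
          gcongr
          linarith
        linarith
      have h7 : 150 / σ * (σ / 4 * n) ≤ L * x.1.card := by gcongr
      have h8 : 150 / σ * (σ / 4 * n) = 37.5 * n := by field_simp; ring
      nlinarith
  refine h1.trans ((sum_le_sum h2).trans ?_)
  rw [sum_const, nsmul_eq_mul]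
  have hIc : (I.card : ℝ) ≤ 4 ^ n := by
    have : I.card ≤ 4 ^ n := by
      refine (card_le_univ I).trans ?_
      rw [Fintype.card_prod, Fintype.card_finset, Fintype.card_fin, ← mul_pow]; norm_num
    exact_mod_cast this
  calc (I.card : ℝ) * Real.exp (-(3 * n)) ≤ Real.exp 2 ^ n * Real.exp (-(3 * n)) := by
        gcongr
        exact hIc.trans (by gcongr; exact exp2_ge_four)
    _ = Real.exp (n * 2 + -(3 * n)) := by rw [Real.exp_add, Real.exp_nat_mul]
    _ ≤ _ := by
        apply Real.exp_le_exp.2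
        have := h.Ln; linarith

lemma sum_finset_pow {n : ℕ} (x : ℝ) : ∑ S : Finset (Fin n), x ^ S.card = (1 + x) ^ n := by
  have := Fintype.sum_pow_mul_eq_add_pow (Fin n) x 1
  simp only [one_pow, mul_one, Fintype.card_fin] at this
  rw [this, add_comm]

lemma sum_finset_pow_le {n : ℕ} (hn : 1 ≤ n) (x : ℝ) (hx0 : 0 ≤ x) (hx : x ≤ 1 / n) :
    ∑ S : Finset (Fin n), x ^ S.card ≤ 3 := by
  rw [sum_finset_pow]
  have hn' : (0 : ℝ) < n := by exact_mod_cast hn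
  calc (1 + x) ^ n ≤ (Real.exp x) ^ n := by
        gcongr
        have := Real.add_one_le_exp x; linarith
    _ = Real.exp (n * x) := (Real.exp_nat_mul _ _).symm
    _ ≤ Real.exp 1 := by
        apply Real.exp_le_exp.2
        rw [le_div_iff₀ hn'] at hx; linarith
    _ ≤ 3 := by have := Real.exp_one_lt_d9; linarith

lemma prob3 {n : ℕ} {p L : ℝ} (h : PH n p L) :
    gnpProb n p (fun G => ¬ ∀ S : Finset (Fin n), S.Nonempty → (S.card : ℝ) ≤ Real.exp (-56160) * n →
      (eIn G S : ℝ) < L * S.card / 16000) ≤ 3 * Real.exp (-L) := by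
  have hp0 := h.p0
  have hL1 := h.hL1
  have hn0 := h.n0
  obtain ⟨I, hI⟩ : ∃ I : Finset (Finset (Fin n)), I = univ.filter fun S =>
    S.Nonempty ∧ (S.card : ℝ) ≤ Real.exp (-56160) * n := ⟨_, rfl⟩
  have mI : ∀ x, x ∈ I ↔ x.Nonempty ∧ (x.card : ℝ) ≤ Real.exp (-56160) * n :=
    fun x => by rw [hI, mem_filter]; simp
  have h1 : gnpProb n p (fun G => ¬ ∀ S : Finset (Fin n), S.Nonempty →
      (S.card : ℝ) ≤ Real.exp (-56160) * n → (eIn G S : ℝ) < L * S.card / 16000) ≤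
      ∑ S ∈ I, gnpProb n p (fun G => L * S.card / 16000 ≤ (eIn G S : ℝ)) := by
    refine le_trans (prob_mono h.p0.le h.p1' ?_) (prob_union h.p0.le h.p1' I _)
    intro G hG
    push Not at hG
    obtain ⟨U, a, b, c⟩ := hG
    exact ⟨U, (mI _).2 ⟨a, b⟩, c⟩
  have h2 : ∀ S ∈ I, gnpProb n p (fun G => L * S.card / 16000 ≤ (eIn G S : ℝ)) ≤
      Real.exp (-L) * Real.exp (-2 * L) ^ S.card := by
    intro S hS
    obtain ⟨a, b⟩ := (mI S).1 hS
    have hs1 : (1 : ℝ) ≤ S.card := by exact_mod_cast card_pos.2 a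
    refine (master1 h.p0.le h.p1' (inE ⊤ S) (inE_sub_EE _ _) 56160
      (56160 * (L * S.card / 16000)) _ ?_).trans ?_
    · intro G hG
      rw [inter_inE, ← eIn_eq]
      gcongr
    · rw [← Real.exp_nat_mul, ← Real.exp_add]
      apply Real.exp_le_exp.2
      rw [card_inE_top]
      have h3 := choose_two_le S.card
      have hE := Real.exp_pos 56160
      have h4 : (S.card.choose 2 : ℝ) * (p * (Real.exp 56160 - 1)) ≤
          (S.card ^ 2 / 2) * (p * Real.exp 56160) := by
        have : 1 ≤ Real.exp 56160 := Real.one_le_exp (by norm_num)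
        apply mul_le_mul h3 _ (mul_nonneg hp0.le (by linarith)) (by positivity)
        gcongr; linarith
      have h5 : (S.card : ℝ) * Real.exp 56160 ≤ n := by
        calc (S.card : ℝ) * Real.exp 56160 ≤ Real.exp (-56160) * n * Real.exp 56160 := by gcongr
          _ = (Real.exp (-56160) * Real.exp 56160) * n := by ring
          _ = n := by rw [← Real.exp_add]; simp
      have h6 : (S.card ^ 2 / 2 : ℝ) * (p * Real.exp 56160) ≤ S.card / 2 * (n * p) := by
        calc (S.card ^ 2 / 2 : ℝ) * (p * Real.exp 56160) =
              S.card / 2 * ((S.card * Real.exp 56160) * p) := by ring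
          _ ≤ S.card / 2 * (n * p) := by gcongr
      have h7 : (S.card / 2 : ℝ) * (n * p) ≤ S.card / 2 * (1.02 * L) :=
        mul_le_mul_of_nonneg_left h.hhi (by positivity)
      have h8 : L ≤ L * S.card := by nlinarith
      linarith
  refine h1.trans ((sum_le_sum h2).trans ?_)
  rw [← mul_sum, mul_comm]
  gcongr
  refine le_trans (sum_le_sum_of_subset_of_nonneg (subset_univ I) fun _ _ _ => by positivity) ?_
  refine sum_finset_pow_le (by have := h.hn; omega) _ (by positivity) ?_
  rw [show -2 * L = -L + -L by ring, Real.exp_add, Real.exp_neg, h.expL, one_div]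
  have : (n : ℝ)⁻¹ ≤ 1 := inv_le_one_of_one_le₀ (by linarith)
  have h0 : 0 ≤ (n : ℝ)⁻¹ := by positivity
  nlinarith


lemma prob4 {n : ℕ} {p L : ℝ} (h : PH n p L) :
    gnpProb n p (fun G => ¬ ∀ S : Finset (Fin n), S.card = 5 → eIn G S ≤ 5) ≤
      3 * (Real.exp 10 * (2 * L) ^ 6) * Real.exp (-L) := by
  have hp0 := h.p0
  have hL1 := h.hL1
  have hn0 := h.n0
  obtain ⟨I, hI⟩ : ∃ I : Finset (Finset (Fin n)), I = univ.filter fun S => S.card = 5 := ⟨_, rfl⟩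
  have mI : ∀ x, x ∈ I ↔ x.card = 5 := fun x => by rw [hI, mem_filter]; simp
  have h1 : gnpProb n p (fun G => ¬ ∀ S : Finset (Fin n), S.card = 5 → eIn G S ≤ 5) ≤
      ∑ S ∈ I, gnpProb n p (fun G => 6 ≤ eIn G S) := by
    refine le_trans (prob_mono h.p0.le h.p1' ?_) (prob_union h.p0.le h.p1' I _)
    intro G hG
    push Not at hG
    obtain ⟨U, a, b⟩ := hG
    exact ⟨U, (mI _).2 a, b⟩
  have hexp : Real.exp (-Real.log p) = p⁻¹ := by rw [Real.exp_neg, Real.exp_log hp0]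
  have hlog : Real.log p ≤ 0 := Real.log_nonpos hp0.le h.p1'
  have h2 : ∀ S ∈ I, gnpProb n p (fun G => 6 ≤ eIn G S) ≤
      Real.exp 10 * (2 * L) ^ 6 * Real.exp (-L) * ((1 / n : ℝ)) ^ S.card := by
    intro S hS
    have a := (mI S).1 hS
    refine (master1 h.p0.le h.p1' (inE ⊤ S) (inE_sub_EE _ _) (-Real.log p)
      (-Real.log p * 6) _ ?_).trans ?_
    · intro G hG
      rw [inter_inE, ← eIn_eq]
      have : (6 : ℝ) ≤ eIn G S := by exact_mod_cast hG
      apply mul_le_mul_of_nonneg_left this; linarith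
    · rw [card_inE_top, a, hexp]
      have h3 : p * (p⁻¹ - 1) ≤ 1 := by
        have : p * (p⁻¹ - 1) = 1 - p := by field_simp
        linarith
      have h5 : ((Nat.choose 5 2 : ℕ) : ℝ) = 10 := by norm_num [Nat.choose]
      calc Real.exp (-(-Real.log p * 6) + ((Nat.choose 5 2 : ℕ) : ℝ) * (p * (p⁻¹ - 1)))
          ≤ Real.exp (10 + (6 : ℕ) * Real.log p) := by
            apply Real.exp_le_exp.2; rw [h5]; push_cast; linarith
        _ = Real.exp 10 * p ^ 6 := by rw [Real.exp_add, Real.exp_nat_mul, Real.exp_log hp0]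
        _ = Real.exp 10 * (n * p) ^ 6 * (1 / n) * (1 / n) ^ 5 := by field_simp
        _ ≤ Real.exp 10 * (2 * L) ^ 6 * (1 / n) * (1 / n) ^ 5 := by
            have hnp : n * p ≤ 2 * L := by have := h.hhi; linarith
            have hnp6 : (n * p) ^ 6 ≤ (2 * L) ^ 6 := pow_le_pow_left₀ (by positivity) hnp 6
            gcongr
        _ = _ := by rw [Real.exp_neg, h.expL, one_div]
  refine h1.trans ((sum_le_sum h2).trans ?_)
  rw [← mul_sum]
  have h9 : ∑ S ∈ I, ((1 / n : ℝ)) ^ S.card ≤ 3 := by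
    refine le_trans (sum_le_sum_of_subset_of_nonneg (subset_univ I) fun _ _ _ => by positivity) ?_
    exact sum_finset_pow_le (by have := h.hn; omega) _ (by positivity) le_rfl
  have h10 : 0 ≤ Real.exp 10 * (2 * L) ^ 6 * Real.exp (-L) := by positivity
  nlinarith

lemma prob5 {n : ℕ} {p L : ℝ} (h : PH n p L) :
    gnpProb n p (fun G => ¬ ∀ S : Finset (Fin n), S.card ≤ 5 → ∀ x ∈ S, ∀ y ∈ S, x ≠ y →
      S.card ≤ eIn G S + 1 → 0.1 * L ≤ G.degree x ∨ 0.1 * L ≤ G.degree y) ≤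
      3 * (25 * Real.exp 20 * (2 * L) ^ 4) * Real.exp (-(0.3 * L)) := by
  have hp0 := h.p0
  have hL1 := h.hL1
  have hn0 := h.n0
  obtain ⟨I, hI⟩ : ∃ I : Finset (Finset (Fin n)), I = univ.filter fun S => S.card ≤ 5 := ⟨_, rfl⟩
  have mI : ∀ x, x ∈ I ↔ x.card ≤ 5 := fun x => by rw [hI, mem_filter]; simp
  have h1 : gnpProb n p (fun G => ¬ ∀ S : Finset (Fin n), S.card ≤ 5 → ∀ x ∈ S, ∀ y ∈ S, x ≠ y →
      S.card ≤ eIn G S + 1 → 0.1 * L ≤ G.degree x ∨ 0.1 * L ≤ G.degree y) ≤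
      ∑ z ∈ I.sigma (fun S => S.offDiag), gnpProb n p (fun G => z.1.card ≤ eIn G z.1 + 1 ∧
        (G.degree z.2.1 : ℝ) < 0.1 * L ∧ (G.degree z.2.2 : ℝ) < 0.1 * L) := by
    refine le_trans (prob_mono h.p0.le h.p1' ?_) (prob_union h.p0.le h.p1' _ _)
    intro G hG
    push Not at hG
    obtain ⟨S, a, x, hx, y, hy, hxy, b, c, d⟩ := hG
    refine ⟨⟨S, (x, y)⟩, ?_, b, c, d⟩
    rw [mem_sigma, mem_offDiag]
    exact ⟨(mI _).2 a, hx, hy, hxy⟩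
  have hexp : Real.exp (-Real.log p) = p⁻¹ := by rw [Real.exp_neg, Real.exp_log hp0]
  have hlog : Real.log p ≤ 0 := Real.log_nonpos hp0.le h.p1'
  have h2 : ∀ z ∈ I.sigma (fun S => S.offDiag), gnpProb n p (fun G => z.1.card ≤ eIn G z.1 + 1 ∧
        (G.degree z.2.1 : ℝ) < 0.1 * L ∧ (G.degree z.2.2 : ℝ) < 0.1 * L) ≤
      Real.exp 20 * (2 * L) ^ 4 * Real.exp (-(0.3 * L)) * ((1 / n : ℝ)) ^ z.1.card := by
    rintro ⟨S, x, y⟩ hz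
    rw [mem_sigma, mem_offDiag] at hz
    obtain ⟨hS, hx, hy, hxy⟩ := hz
    have hS := (mI _).1 hS
    simp only at hS hx hy hxy ⊢
    have hs2 : 2 ≤ S.card := one_lt_card.2 ⟨x, hx, y, hy, hxy⟩
    have hdis : Disjoint ({x, y} : Finset (Fin n)) (univ \ S) := by
      rw [Finset.disjoint_left]
      intro w hw hw'
      rw [Finset.mem_sdiff] at hw'
      rw [mem_insert, mem_singleton] at hw
      rcases hw with rfl | rfl
      · exact hw'.2 hx
      · exact hw'.2 hy
    have hF : Disjoint (inE ⊤ S) (btE ⊤ {x, y} (univ \ S)) := by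
      rw [Finset.disjoint_left]
      intro e he he'
      unfold btE at he'
      rw [mem_image] at he'
      obtain ⟨q, hq, rfl⟩ := he'
      have h3 := ((mem_btP _ _ _ _).1 hq).1.2
      rw [Finset.mem_sdiff] at h3
      exact h3.2 (((mem_inE _ _ _).1 he).2 q.2 (Sym2.mem_mk_right _ _))
    obtain ⟨F1, hF1⟩ : ∃ F1, F1 = inE (⊤ : SimpleGraph (Fin n)) S := ⟨_, rfl⟩
    obtain ⟨F2, hF2⟩ : ∃ F2, F2 = btE (⊤ : SimpleGraph (Fin n)) {x, y} (univ \ S) := ⟨_, rfl⟩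
    rw [← hF1, ← hF2] at hF
    have hsum : ∀ (E : Finset (Sym2 (Fin n))) (a b : ℝ),
        ∑ e ∈ E, (if e ∈ F1 then a else if e ∈ F2 then b else 0) =
          a * (E ∩ F1).card + b * (E ∩ F2).card := by
      intro E a b
      have : ∀ e ∈ E, (if e ∈ F1 then a else if e ∈ F2 then b else 0) =
          (if e ∈ F1 then a else 0) + (if e ∈ F2 then b else 0) := by
        intro e _
        by_cases h1 : e ∈ F1
        · have := Finset.disjoint_left.1 hF h1
          simp [h1, this]
        · simp [h1]
      rw [sum_congr rfl this, sum_add_distrib, sum_ite_mem, sum_ite_mem, sum_const, sum_const]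
      simp only [nsmul_eq_mul]; ring
    refine (master h.p0.le h.p1' ∅ (empty_subset _)
      (fun e => if e ∈ F1 then -Real.log p else if e ∈ F2 then -2 else 0) (by simp)
      (-Real.log p * (S.card - 1 : ℕ) - 0.4 * L) _ ?_).trans ?_
    · intro G hG
      refine ⟨empty_subset _, ?_⟩
      rw [hsum, hF1, hF2, inter_inE, inter_btE, ← eIn_eq, card_btE _ _ _ hdis]
      obtain ⟨a, b, c⟩ := hG
      have h4 : ((S.card - 1 : ℕ) : ℝ) ≤ eIn G S := by
        exact_mod_cast (by omega : S.card - 1 ≤ eIn G S)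
      have h5 : (eBetween G {x, y} (univ \ S) : ℝ) ≤ G.degree x + G.degree y := by
        have := eBetween_le_deg G {x, y} (univ \ S)
        rw [sum_pair hxy] at this
        exact_mod_cast this
      have h6 : -Real.log p * (S.card - 1 : ℕ) ≤ -Real.log p * eIn G S :=
        mul_le_mul_of_nonneg_left h4 (by linarith)
      linarith
    · have h3 : ∀ e, p * (Real.exp (if e ∈ F1 then -Real.log p else if e ∈ F2 then -2 else 0) - 1) =
          if e ∈ F1 then (1 - p) else if e ∈ F2 then p * (Real.exp (-2) - 1) else 0 := by
        intro e
        split_ifs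
        · rw [hexp]; field_simp
        · rfl
        · simp
      rw [sum_congr rfl fun e _ => h3 e, hsum, inter_eq_right.2 (hF1 ▸ inE_sub_EE _ _),
        inter_eq_right.2 (hF2 ▸ btE_sub_EE _ _ _), card_empty, pow_zero, one_mul]
      have c1 : (F1.card : ℝ) ≤ 13 := by
        rw [hF1, card_inE_top]
        have h5 : (S.card : ℝ) ≤ 5 := by exact_mod_cast hS
        have := choose_two_le S.card
        nlinarith
      have c2 : 2 * (n : ℝ) - 10 ≤ F2.card := by
        rw [hF2, card_btE_top _ _ hdis, card_pair hxy]
        have h6 := le_card_sdiff S univ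
        rw [card_univ, Fintype.card_fin] at h6
        have h7 : n ≤ (univ \ S).card + 5 := by omega
        have : (n : ℝ) ≤ (univ \ S).card + 5 := by exact_mod_cast h7
        push_cast; linarith
      have e2 := exp_neg_two_le
      have h8 : (1 - p) * F1.card ≤ 13 := by nlinarith
      have h9 : p * (Real.exp (-2) - 1) * F2.card ≤ -(0.86 * (2 * L - 10 * p)) := by
        have h10 : (2 * (n : ℝ) - 10) * p * 0.86 ≤ F2.card * p * (1 - Real.exp (-2)) := by
          gcongr
          linarith
        have := h.hlo
        linarith
      have h10 := h.p1
      calc _ ≤ Real.exp (20 + -(1.3 * L) + (S.card - 1 : ℕ) * Real.log p) := by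
            apply Real.exp_le_exp.2
            linarith
        _ = Real.exp 20 * Real.exp (-(0.3 * L)) * (Real.exp (-L) * p ^ (S.card - 1)) := by
            rw [Real.exp_add, Real.exp_add, Real.exp_nat_mul, Real.exp_log hp0,
              show -(1.3 * L) = -(0.3 * L) + -L by ring, Real.exp_add]
            ring
        _ = Real.exp 20 * Real.exp (-(0.3 * L)) * ((n * p) ^ (S.card - 1) * (1 / n) ^ S.card) := by
            rw [Real.exp_neg L, h.expL]
            obtain ⟨s, hs⟩ : ∃ s, S.card = s + 1 := ⟨S.card - 1, by omega⟩
            rw [hs, Nat.add_sub_cancel]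
            congr 1
            rw [mul_pow, one_div, pow_succ, inv_pow]
            field_simp
        _ ≤ Real.exp 20 * Real.exp (-(0.3 * L)) * ((2 * L) ^ 4 * (1 / n) ^ S.card) := by
            gcongr
            calc (n * p) ^ (S.card - 1) ≤ (2 * L) ^ (S.card - 1) := by
                  have hnp : n * p ≤ 2 * L := by have := h.hhi; linarith
                  exact pow_le_pow_left₀ (by positivity) hnp _
              _ ≤ (2 * L) ^ 4 := by
                  apply pow_le_pow_right₀ (by linarith); omega
        _ = _ := by ring
  refine h1.trans ((sum_le_sum h2).trans ?_)
  rw [sum_sigma]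
  simp only [sum_const, nsmul_eq_mul]
  have h9 : ∑ S ∈ I, ((1 / n : ℝ)) ^ S.card ≤ 3 := by
    refine le_trans (sum_le_sum_of_subset_of_nonneg (subset_univ I) fun _ _ _ => by positivity) ?_
    exact sum_finset_pow_le (by have := h.hn; omega) _ (by positivity) le_rfl
  calc _ ≤ ∑ S ∈ I, (25 * (Real.exp 20 * (2 * L) ^ 4 * Real.exp (-(0.3 * L)))) * (1 / n : ℝ) ^ S.card := by
        refine sum_le_sum fun S hS => ?_
        rw [← mul_assoc]
        gcongr
        have hS := (mI _).1 hS
        rw [offDiag_card]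
        have : S.card * S.card - S.card ≤ 25 := by
          have := Nat.mul_le_mul hS hS; omega
        exact_mod_cast this
    _ ≤ _ := by
        rw [← mul_sum]
        have h10 : 0 ≤ Real.exp 20 * (2 * L) ^ 4 * Real.exp (-(0.3 * L)) := by positivity
        nlinarith


lemma prob8 {n : ℕ} {p L : ℝ} (h : PH n p L) :
    gnpProb n p (fun G => ¬ ∀ Γ ≤ G, (Γ.edgeFinset.card : ℝ) ≤ 0.001 * n * L →
      (n : ℝ) ^ 2 / 32 ≤ (Boo Γ).card → 0.005 * n * L < (G.edgeFinset ∩ Boo Γ).card) ≤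
      Real.exp (-(0.1 * L)) := by
  have hp0 := h.p0
  have hL1 := h.hL1
  have hn0 := h.n0
  have hlo := h.hlo
  have hhi := h.hhi
  have e2 := exp_neg_two_le
  have e4 := exp_neg_four_le
  have e4p := Real.exp_pos (-4)
  have e2p := Real.exp_pos (-2)
  obtain ⟨I, hI⟩ : ∃ I : Finset (SimpleGraph (Fin n)), I = univ.filter fun Γ =>
    (Γ.edgeFinset.card : ℝ) ≤ 0.001 * n * L ∧ (n : ℝ) ^ 2 / 32 ≤ (Boo Γ).card := ⟨_, rfl⟩
  have mI : ∀ Γ, Γ ∈ I ↔ (Γ.edgeFinset.card : ℝ) ≤ 0.001 * n * L ∧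
      (n : ℝ) ^ 2 / 32 ≤ (Boo Γ).card := fun x => by rw [hI, mem_filter]; simp
  have h1 : gnpProb n p (fun G => ¬ ∀ Γ ≤ G, (Γ.edgeFinset.card : ℝ) ≤ 0.001 * n * L →
      (n : ℝ) ^ 2 / 32 ≤ (Boo Γ).card → 0.005 * n * L < (G.edgeFinset ∩ Boo Γ).card) ≤
      ∑ Γ ∈ I, gnpProb n p (fun G => Γ ≤ G ∧
        ((G.edgeFinset ∩ Boo Γ).card : ℝ) ≤ 0.005 * n * L) := by
    refine le_trans (prob_mono h.p0.le h.p1' ?_) (prob_union h.p0.le h.p1' I _)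
    intro G hG
    push Not at hG
    obtain ⟨Γ, a, b, c, d⟩ := hG
    exact ⟨Γ, (mI _).2 ⟨b, c⟩, a, d⟩
  have hnL : 0 ≤ n * L := by positivity
  have h2 : ∀ Γ ∈ I, gnpProb n p (fun G => Γ ≤ G ∧
        ((G.edgeFinset ∩ Boo Γ).card : ℝ) ≤ 0.005 * n * L) ≤
      Real.exp (-(0.012 * (n * L))) * (p * Real.exp (-4)) ^ Γ.edgeFinset.card := by
    intro Γ hΓ
    rw [mI] at hΓ
    have hB : Boo Γ ⊆ EE n := by
      intro e he
      rw [Boo, mem_filter, Finset.mem_sdiff] at he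
      exact he.1.1
    have hdis : ∀ e ∈ Γ.edgeFinset, e ∉ Boo Γ := by
      intro e he he'
      rw [Boo, mem_filter, Finset.mem_sdiff] at he'
      exact he'.1.2 he
    refine (master h.p0.le h.p1' Γ.edgeFinset (edge_sub_EE _)
      (fun e => if e ∈ Boo Γ then -2 else 0) (fun e he => if_neg (hdis e he))
      (-(0.01 * (n * L))) _ ?_).trans ?_
    · rintro G ⟨hG, hG2⟩
      refine ⟨edgeFinset_subset_edgeFinset.2 hG, ?_⟩
      rw [sum_ite_mem, sum_const, nsmul_eq_mul]
      linarith
    · have e : ∑ e ∈ EE n, p * (Real.exp (if e ∈ Boo Γ then -2 else 0) - 1) =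
          (Boo Γ).card * (p * (Real.exp (-2) - 1)) := by
        calc _ = ∑ e ∈ EE n, if e ∈ Boo Γ then p * (Real.exp (-2) - 1) else 0 := by
              refine sum_congr rfl fun e _ => ?_
              split_ifs <;> simp
          _ = _ := by rw [sum_ite_mem, inter_eq_right.2 hB, sum_const, nsmul_eq_mul]
      rw [e, mul_pow, ← Real.exp_nat_mul, mul_left_comm (Real.exp _), ← Real.exp_add]
      refine mul_le_mul_of_nonneg_left (Real.exp_le_exp.2 ?_) (by positivity)
      have h3 : (n : ℝ) ^ 2 / 32 * (p * 0.86) ≤ (Boo Γ).card * (p * (1 - Real.exp (-2))) := by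
        have := hΓ.2
        gcongr
        linarith
      have h4 : n * L ≤ n * (n * p) := by gcongr
      have h5 := hΓ.1
      nlinarith
  refine h1.trans ((sum_le_sum h2).trans ?_)
  rw [← mul_sum]
  have h9 : ∑ Γ ∈ I, (p * Real.exp (-4)) ^ Γ.edgeFinset.card ≤ Real.exp (0.0101 * (n * L)) := by
    refine le_trans (sum_le_sum_of_subset_of_nonneg (subset_univ I) fun _ _ _ => by positivity) ?_
    rw [sum_pow_graph]
    calc (1 + p * Real.exp (-4)) ^ (n.choose 2) ≤ Real.exp (p * Real.exp (-4)) ^ (n.choose 2) := by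
          gcongr; have := Real.add_one_le_exp (p * Real.exp (-4)); linarith
      _ = Real.exp ((n.choose 2 : ℕ) * (p * Real.exp (-4))) := by rw [Real.exp_nat_mul]
      _ ≤ _ := by
          apply Real.exp_le_exp.2
          have h1 : ((n.choose 2 : ℕ) : ℝ) * (p * Real.exp (-4)) ≤ (n ^ 2 / 2) * (p * 0.0196) := by
            have := choose_two_le n
            gcongr
          have h8 : (n : ℝ) * (n * p) ≤ n * (1.02 * L) := by gcongr
          linarith
  calc _ ≤ Real.exp (-(0.012 * (n * L))) * Real.exp (0.0101 * (n * L)) := by gcongr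
    _ ≤ _ := by
      rw [← Real.exp_add]
      apply Real.exp_le_exp.2
      have h9 : 100 * L ≤ n * L := by gcongr
      linarith

lemma prob1 {n : ℕ} {p L : ℝ} (h : PH n p L) :
    gnpProb n p (fun G => ¬ ∀ v, 2 ≤ G.degree v) ≤ Real.exp (3 + L + Real.log L - n * p) := by
  have hp0 := h.p0
  have hL1 := h.hL1
  have hn0 := h.n0
  have hlo := h.hlo
  have hhi := h.hhi
  have hp1 := h.p1
  have h1 : gnpProb n p (fun G => ¬ ∀ v, 2 ≤ G.degree v) ≤
      ∑ v : Fin n, gnpProb n p (fun G => G.degree v ≤ 1) := by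
    refine le_trans (prob_mono h.p0.le h.p1' ?_) (prob_union h.p0.le h.p1' univ _)
    intro G hG
    push Not at hG
    obtain ⟨v, hv⟩ := hG
    exact ⟨v, mem_univ _, by omega⟩
  have hlog : 0 ≤ Real.log L := Real.log_nonneg (by linarith)
  have h2 : ∀ v ∈ (univ : Finset (Fin n)), gnpProb n p (fun G => G.degree v ≤ 1) ≤
      Real.exp (3 + Real.log L - n * p) := by
    intro v _
    have hd : Disjoint ({v} : Finset (Fin n)) (univ \ {v}) := disjoint_sdiff
    refine (master1 h.p0.le h.p1' (btE ⊤ {v} (univ \ {v})) (btE_sub_EE _ _ _)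
      (-Real.log L) (-Real.log L) _ ?_).trans ?_
    · intro G hG
      rw [inter_btE, card_btE _ _ _ hd, eBetween_star_univ]
      have : (G.degree v : ℝ) ≤ 1 := by exact_mod_cast hG
      nlinarith
    · apply Real.exp_le_exp.2
      rw [card_btE_top _ _ hd, card_singleton, one_mul, Real.exp_neg, Real.exp_log (by linarith)]
      have hc : (((univ \ {v} : Finset (Fin n)).card : ℕ) : ℝ) = n - 1 := by
        rw [card_sdiff_of_subset (subset_univ _), card_univ, Fintype.card_fin, card_singleton,
          Nat.cast_sub (by have := h.hn; omega)]
        simp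
      rw [hc]
      have h3 : n * p * L⁻¹ ≤ 1.02 := by
        rw [← div_eq_mul_inv, div_le_iff₀ (by linarith)]; exact hhi
      have h4 : 0 ≤ p * L⁻¹ := by positivity
      nlinarith
  refine h1.trans ((sum_le_sum h2).trans ?_)
  rw [sum_const, card_univ, Fintype.card_fin, nsmul_eq_mul, ← h.expL, ← Real.exp_add, h.expL]
  apply Real.exp_le_exp.2
  linarith


lemma gE_sum {n : ℕ} (p : ℝ) {ι : Type*} (I : Finset ι) (f : ι → SimpleGraph (Fin n) → ℝ) :
    gE n p (fun G => ∑ i ∈ I, f i G) = ∑ i ∈ I, gE n p (f i) := by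
  unfold gE
  rw [sum_comm]
  refine sum_congr rfl fun G _ => ?_
  rw [mul_sum]

lemma gE_lin {n : ℕ} (p : ℝ) (x y : ℝ) (f g : SimpleGraph (Fin n) → ℝ) :
    gE n p (fun G => 1 + x * f G + y * g G) = 1 + x * gE n p f + y * gE n p g := by
  conv_rhs => rw [← gE_one (n := n) p]
  unfold gE
  rw [mul_sum, mul_sum, ← sum_add_distrib, ← sum_add_distrib]
  refine sum_congr rfl fun G _ => ?_
  ring

/-- Second moment bound. -/
lemma second_moment {n : ℕ} {p : ℝ} (h0 : 0 ≤ p) (h1 : p ≤ 1) (hn : 0 < n)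
    (A : Fin n → SimpleGraph (Fin n) → Prop) (a c : ℝ) (ha : 0 < a)
    (hA : ∀ v, gnpProb n p (A v) = a)
    (hAA : ∀ u v, u ≠ v → gnpProb n p (fun G => A u G ∧ A v G) ≤ c * a ^ 2) (hc : 0 ≤ c) :
    gnpProb n p (fun G => ¬ ∃ v, A v G) ≤ 1 / (n * a) + (c - 1) := by
  obtain ⟨f, hf⟩ : ∃ f : Fin n → SimpleGraph (Fin n) → ℝ, f = fun v G => if A v G then 1 else 0 :=
    ⟨_, rfl⟩
  have hn' : (0 : ℝ) < n := by exact_mod_cast hn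
  have hM : 0 < n * a := by positivity
  have e1 : gnpProb n p (fun G => ¬ ∃ v, A v G) ≤
      gE n p (fun G => (1 - (∑ v, f v G) / (n * a)) ^ 2) := by
    refine prob_le_gE h0 h1 (fun G => sq_nonneg _) ?_
    intro G hG
    have : ∑ v, f v G = 0 := by
      apply sum_eq_zero
      intro v _
      rw [hf]
      exact if_neg fun h => hG ⟨v, h⟩
    rw [this]; norm_num
  have e2 : (fun G => (1 - (∑ v, f v G) / (n * a)) ^ 2) = fun G =>
      1 + (-2 / (n * a)) * (∑ v, f v G) + (1 / (n * a) ^ 2) * (∑ u, ∑ v, f u G * f v G) := by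
    ext G
    rw [← sum_mul_sum]
    field_simp
    ring
  have e3 : ∀ v, gE n p (f v) = a := by
    intro v
    rw [← hA v, gnpProb_eq, hf]
  have e4 : ∀ u, ∑ v, gE n p (fun G => f u G * f v G) ≤ a + n * (c * a ^ 2) := by
    intro u
    rw [← add_sum_erase _ _ (mem_univ u)]
    apply add_le_add
    · rw [← e3 u]
      apply le_of_eq
      congr 1
      ext G
      rw [hf]
      by_cases h : A u G <;> simp [h]
    · have : ∀ v ∈ univ.erase u, gE n p (fun G => f u G * f v G) ≤ c * a ^ 2 := by
        intro v hv
        refine le_trans (le_of_eq ?_) (hAA u v (ne_of_mem_erase hv).symm)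
        rw [gnpProb_eq]
        congr 1
        ext G
        rw [hf]
        by_cases h : A u G <;> by_cases h' : A v G <;> simp [h, h']
      refine (sum_le_card_nsmul _ _ _ this).trans ?_
      rw [nsmul_eq_mul]
      gcongr
      have := card_le_card (erase_subset u (univ : Finset (Fin n)))
      rwa [card_univ, Fintype.card_fin] at this
  have e5 : ∑ u, ∑ v, gE n p (fun G => f u G * f v G) ≤ n * (a + n * (c * a ^ 2)) := by
    refine (sum_le_card_nsmul _ _ _ fun u _ => e4 u).trans ?_
    rw [nsmul_eq_mul, card_univ, Fintype.card_fin]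
  rw [e2, gE_lin, gE_sum, gE_sum, sum_congr rfl fun v _ => e3 v, sum_const, card_univ,
    Fintype.card_fin, nsmul_eq_mul, sum_congr rfl fun u _ => gE_sum p univ _] at e1
  refine e1.trans ?_
  have e6 : 1 / (n * a) ^ 2 * ∑ u, ∑ v, gE n p (fun G => f u G * f v G) ≤
      1 / (n * a) ^ 2 * (n * (a + n * (c * a ^ 2))) := by gcongr
  have e7 : 1 / (n * a) ^ 2 * (n * (a + n * (c * a ^ 2))) = 1 / (n * a) + c := by
    field_simp
  have e8 : -2 / (n * a) * (n * a) = -2 := by field_simp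
  linarith

lemma star_disj {n : ℕ} {u v : Fin n} (huv : u ≠ v) (B C : Finset (Fin n)) (hu : u ∉ C) :
    Disjoint (btE ⊤ {u} B) (btE ⊤ {v} C) := by
  rw [Finset.disjoint_left]
  intro e he he'
  unfold btE at he he'
  rw [mem_image] at he he'
  obtain ⟨⟨a, b⟩, hq, rfl⟩ := he
  obtain ⟨⟨c, d⟩, hq', h⟩ := he'
  rw [mem_btP] at hq hq'
  simp only [mem_singleton] at hq hq'
  obtain ⟨⟨rfl, h1⟩, h2⟩ := hq
  obtain ⟨⟨rfl, h1'⟩, h2'⟩ := hq'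
  have h : s(c, d) = s(a, b) := h
  rw [Sym2.eq_iff] at h
  rcases h with ⟨rfl, rfl⟩ | ⟨rfl, rfl⟩
  · exact huv rfl
  · exact hu h1'

lemma btE_mono {n : ℕ} (G : SimpleGraph (Fin n)) (U : Finset (Fin n)) {B C : Finset (Fin n)}
    (h : B ⊆ C) : btE G U B ⊆ btE G U C := by
  intro e he
  unfold btE at he ⊢
  rw [mem_image] at he ⊢
  obtain ⟨q, hq, rfl⟩ := he
  rw [mem_btP] at hq
  exact ⟨q, (mem_btP _ _ _ _).2 ⟨⟨hq.1.1, h hq.1.2⟩, hq.2⟩, rfl⟩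

lemma bt_zero (p : ℝ) : bt p 0 0 = 1 := by simp [bt]
lemma bt_one (p : ℝ) : bt p 1 0 = 1 - p := by simp [bt]

lemma deg_prob {n : ℕ} (p : ℝ) (k : ℕ) (v : Fin n) :
    gnpProb n p (fun G => G.degree v ≤ k) = bt p (n - 1) k := by
  have hd : Disjoint ({v} : Finset (Fin n)) (univ \ {v}) := disjoint_sdiff
  have := prob_two p (btE ⊤ {v} (univ \ {v})) ∅ (btE_sub_EE _ _ _) (empty_subset _)
    (disjoint_empty_right _) k 0
  rw [card_empty, bt_zero, mul_one, card_btE_top _ _ hd, card_singleton, one_mul,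
    card_sdiff_of_subset (subset_univ _), card_univ, Fintype.card_fin, card_singleton] at this
  rw [← this]
  congr 1
  ext G
  rw [inter_btE, card_btE _ _ _ hd, eBetween_star_univ]
  simp

lemma card_minus_pair {n : ℕ} {u v : Fin n} (huv : u ≠ v) :
    (univ \ {u, v} : Finset (Fin n)).card = n - 2 := by
  rw [card_sdiff_of_subset (subset_univ _), card_univ, Fintype.card_fin, card_pair huv]

lemma deg_pair {n : ℕ} {p : ℝ} (h0 : 0 ≤ p) (h1 : p ≤ 1) (k : ℕ) {u v : Fin n} (huv : u ≠ v) :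
    gnpProb n p (fun G => G.degree u ≤ k ∧ G.degree v ≤ k) ≤ bt p (n - 2) k ^ 2 := by
  have hdu : Disjoint ({u} : Finset (Fin n)) (univ \ {u}) := disjoint_sdiff
  have hdv : Disjoint ({v} : Finset (Fin n)) (univ \ {v}) := disjoint_sdiff
  have su : (univ \ {u, v} : Finset (Fin n)) ⊆ univ \ {u} :=
    sdiff_subset_sdiff (subset_refl _) (by simp)
  have sv : (univ \ {u, v} : Finset (Fin n)) ⊆ univ \ {v} :=
    sdiff_subset_sdiff (subset_refl _) (by simp)
  have := prob_two p (btE ⊤ {u} (univ \ {u, v})) (btE ⊤ {v} (univ \ {u, v}))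
    (btE_sub_EE _ _ _) (btE_sub_EE _ _ _) (star_disj huv _ _ (by simp)) k k
  rw [card_btE_top _ _ (hdu.mono_right su), card_btE_top _ _ (hdv.mono_right sv), card_singleton,
    card_singleton, one_mul, card_minus_pair huv] at this
  rw [sq, ← this]
  apply prob_mono h0 h1
  rintro G ⟨a, b⟩
  rw [inter_btE, inter_btE]
  rw [← eBetween_star_univ, ← card_btE _ _ _ hdu] at a
  rw [← eBetween_star_univ, ← card_btE _ _ _ hdv] at b
  exact ⟨(card_le_card (btE_mono _ _ su)).trans a, (card_le_card (btE_mono _ _ sv)).trans b⟩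

lemma bt_ratio {n : ℕ} {p : ℝ} (h0 : 0 ≤ p) (h1 : p ≤ 1) (k : ℕ) {u v : Fin n} (huv : u ≠ v) :
    bt p (n - 2) k * (1 - p) ≤ bt p (n - 1) k := by
  have hdu : Disjoint ({u} : Finset (Fin n)) (univ \ {u}) := disjoint_sdiff
  have su : (univ \ {u, v} : Finset (Fin n)) ⊆ univ \ {u} :=
    sdiff_subset_sdiff (subset_refl _) (by simp)
  have hvu : Disjoint ({v} : Finset (Fin n)) {u} := by
    rw [disjoint_singleton]; exact huv.symm
  have huv' : Disjoint ({u} : Finset (Fin n)) {v} := hvu.symm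
  have hdis : Disjoint (btE (⊤ : SimpleGraph (Fin n)) {u} (univ \ {u, v})) (btE ⊤ {u} {v}) := by
    rw [Finset.disjoint_left]
    intro e he he'
    unfold btE at he he'
    rw [mem_image] at he he'
    obtain ⟨⟨a, b⟩, hq, rfl⟩ := he
    obtain ⟨⟨c, d⟩, hq', h⟩ := he'
    rw [mem_btP] at hq hq'
    simp only [mem_singleton, Finset.mem_sdiff, mem_insert] at hq hq'
    obtain ⟨⟨rfl, h1⟩, h2⟩ := hq
    obtain ⟨⟨rfl, rfl⟩, h2'⟩ := hq'
    have h : s(c, d) = s(c, b) := h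
    rw [Sym2.eq_iff] at h
    rcases h with ⟨-, rfl⟩ | ⟨rfl, rfl⟩
    · exact h1.2 (Or.inr rfl)
    · exact h1.2 (Or.inr rfl)
  have := prob_two p (btE ⊤ {u} (univ \ {u, v})) (btE ⊤ {u} {v})
    (btE_sub_EE _ _ _) (btE_sub_EE _ _ _) hdis k 0
  rw [card_btE_top _ _ (hdu.mono_right su), card_btE_top _ _ huv', card_singleton,
    card_singleton, one_mul, one_mul, bt_one, card_minus_pair huv] at this
  rw [← this, ← deg_prob p k u]
  apply prob_mono h0 h1
  rintro G ⟨a, b⟩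
  rw [inter_btE] at a b
  rw [← eBetween_star_univ, ← card_btE _ _ _ hdu]
  have : btE G {u} (univ \ {u}) ⊆ btE G {u} (univ \ {u, v}) ∪ btE G {u} {v} := by
    intro e he
    unfold btE at he ⊢
    rw [mem_image] at he
    obtain ⟨q, hq, rfl⟩ := he
    rw [mem_btP] at hq
    rw [mem_union, mem_image, mem_image]
    by_cases hv : q.2 = v
    · exact Or.inr ⟨q, (mem_btP _ _ _ _).2 ⟨⟨hq.1.1, by simp [hv]⟩, hq.2⟩, rfl⟩
    · refine Or.inl ⟨q, (mem_btP _ _ _ _).2 ⟨⟨hq.1.1, ?_⟩, hq.2⟩, rfl⟩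
      have := hq.1.2
      simp only [mem_singleton, Finset.mem_sdiff, mem_insert, mem_univ, true_and] at this ⊢
      tauto
  have h3 := (card_le_card this).trans (card_union_le _ _)
  omega

lemma bt_lower {n : ℕ} {p L : ℝ} (h : PH n p L) :
    Real.exp (0.01 * L - 4) ≤ n * bt p (n - 1) ⌊0.01 * L⌋₊ := by
  have hp0 := h.p0
  have hL1 := h.hL1
  have hn0 := h.n0
  have hlo := h.hlo
  have hhi := h.hhi
  have hp1 := h.p1
  have hps := h.psmall
  have hLn := h.Ln
  obtain ⟨k, hk⟩ : ∃ k, k = ⌊0.01 * L⌋₊ := ⟨_, rfl⟩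
  rw [← hk]
  have hk1 : (k : ℝ) ≤ 0.01 * L := by rw [hk]; exact Nat.floor_le (by positivity)
  have hk2 : 0.01 * L < k + 1 := by rw [hk]; exact Nat.lt_floor_add_one _
  have hkn : k + 1 ≤ n := by
    have : (k : ℝ) + 1 ≤ n := by linarith
    exact_mod_cast this
  have hkpos : (1 : ℝ) ≤ k := by linarith
  have t1 : ((n - 1).choose k : ℝ) * p ^ k * (1 - p) ^ (n - 1 - k) ≤ bt p (n - 1) k := by
    unfold bt
    refine single_le_sum (f := fun j => ((n - 1).choose j : ℝ) * p ^ j * (1 - p) ^ (n - 1 - j))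
      (fun j _ => ?_) (mem_range.2 (Nat.lt_succ_self k))
    have : 0 ≤ 1 - p := by linarith
    positivity
  have t2 : ((n : ℝ) - k) ^ k ≤ k ^ k * ((n - 1).choose k : ℝ) := by
    have h1 := Nat.pow_sub_le_descFactorial (n - 1) k
    rw [Nat.descFactorial_eq_factorial_mul_choose] at h1
    have h2 : (n - 1 + 1 - k) ^ k ≤ k ^ k * (n - 1).choose k :=
      h1.trans (Nat.mul_le_mul_right _ (Nat.factorial_le_pow k))
    rw [show n - 1 + 1 - k = n - k by omega] at h2
    have h3 : (((n - k : ℕ) : ℝ)) ^ k ≤ k ^ k * ((n - 1).choose k : ℝ) := by exact_mod_cast h2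
    rwa [Nat.cast_sub (by omega)] at h3
  have t3 : Real.exp 3 ^ k ≤ ((n - 1).choose k : ℝ) * p ^ k := by
    have e3 : Real.exp 3 ≤ 27 := by
      have : Real.exp 3 = Real.exp 1 ^ 3 := by rw [← Real.exp_nat_mul]; norm_num
      rw [this]
      have := Real.exp_one_lt_d9
      calc Real.exp 1 ^ 3 ≤ 3 ^ 3 := by gcongr; linarith
        _ = _ := by norm_num
    have h4 : k * Real.exp 3 ≤ (n - k) * p := by nlinarith
    have h5 : (k * Real.exp 3) ^ k ≤ ((n - k) * p) ^ k := by gcongr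
    rw [mul_pow, mul_pow] at h5
    have h6 : (k : ℝ) ^ k * Real.exp 3 ^ k ≤ k ^ k * (((n - 1).choose k : ℝ) * p ^ k) := by
      refine h5.trans ?_
      rw [← mul_assoc]
      gcongr
    exact le_of_mul_le_mul_left h6 (by positivity)
  have t4 : Real.exp (-(p + 2 * p ^ 2)) ≤ 1 - p := by
    have h1 : 1 / (1 - p) ≤ Real.exp (p + 2 * p ^ 2) := by
      have := Real.add_one_le_exp (p + 2 * p ^ 2)
      refine le_trans ?_ this
      rw [div_le_iff₀ (by linarith)]
      nlinarith
    rw [Real.exp_neg]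
    rw [one_div] at h1
    exact inv_le_of_inv_le₀ (by linarith) h1
  have t5 : Real.exp (-(1.02 * L + 0.1)) ≤ (1 - p) ^ (n - 1 - k) := by
    calc Real.exp (-(1.02 * L + 0.1)) ≤ Real.exp (n * (-(p + 2 * p ^ 2))) := by
          apply Real.exp_le_exp.2
          have : (n * p) * p ≤ 1.02 * L * p := by gcongr
          nlinarith
      _ = Real.exp (-(p + 2 * p ^ 2)) ^ n := by rw [Real.exp_nat_mul]
      _ ≤ (1 - p) ^ n := by gcongr
      _ ≤ _ := by
          apply pow_le_pow_of_le_one (by linarith) (by linarith); omega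
  calc Real.exp (0.01 * L - 4) ≤ Real.exp (L + (k * 3 + -(1.02 * L + 0.1))) := by
        apply Real.exp_le_exp.2; linarith
    _ = n * (Real.exp 3 ^ k * Real.exp (-(1.02 * L + 0.1))) := by
        rw [Real.exp_add, Real.exp_add, h.expL, Real.exp_nat_mul]
    _ ≤ n * (((n - 1).choose k : ℝ) * p ^ k * (1 - p) ^ (n - 1 - k)) := by gcongr
    _ ≤ _ := by gcongr

lemma prob2 {n : ℕ} {p L : ℝ} (h : PH n p L) :
    gnpProb n p (fun G => ¬ ∃ v, (G.degree v : ℝ) ≤ 0.01 * L) ≤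
      Real.exp (-(0.01 * L - 4)) + 0.1 / L := by
  have hp0 := h.p0
  have hL1 := h.hL1
  have hn0 := h.n0
  have hp1 := h.p1
  have hps := h.psmall
  have hb := bt_lower h
  obtain ⟨k, hk⟩ : ∃ k, k = ⌊0.01 * L⌋₊ := ⟨_, rfl⟩
  rw [← hk] at hb
  have hn := h.hn
  obtain ⟨a, ha⟩ : ∃ a, a = bt p (n - 1) k := ⟨_, rfl⟩
  rw [← ha] at hb
  have ha0 : 0 < a := by
    have := Real.exp_pos (0.01 * L - 4)
    by_contra hh
    nlinarith
  have e1 : gnpProb n p (fun G => ¬ ∃ v, (G.degree v : ℝ) ≤ 0.01 * L) =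
      gnpProb n p (fun G => ¬ ∃ v, G.degree v ≤ k) := by
    congr 1
    ext G
    rw [hk]
    simp only [Nat.le_floor_iff (show (0 : ℝ) ≤ 0.01 * L by positivity)]
  rw [e1]
  have hb0 : 0 ≤ bt p (n - 2) k := by
    unfold bt
    apply sum_nonneg
    intro j _
    have : 0 ≤ 1 - p := by linarith
    positivity
  have e2 := second_moment (n := n) h.p0.le h.p1' (by omega) (fun v G => G.degree v ≤ k) a
    (1 / (1 - p) ^ 2) ha0 (fun v => by rw [deg_prob, ha]) (fun u v huv => by
      refine (deg_pair h.p0.le h.p1' k huv).trans ?_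
      have := bt_ratio h.p0.le h.p1' k huv
      rw [← ha] at this
      have h1p : 0 < 1 - p := by linarith
      rw [div_mul_eq_mul_div, one_mul, le_div_iff₀ (by positivity), ← mul_pow]
      gcongr) (by positivity)
  refine e2.trans (add_le_add ?_ ?_)
  · rw [Real.exp_neg, one_div]
    exact inv_anti₀ (Real.exp_pos _) hb
  · have h1 : 1 / (1 - p) ^ 2 ≤ 1 + 3 * p := by
      rw [div_le_iff₀ (by have : 0 < 1 - p := by linarith
                          positivity)]
      have h5 : 0 ≤ p * (1 - 5 * p) := mul_nonneg h.p0.le (by linarith)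
      have h6 : 0 ≤ p ^ 3 := by positivity
      have h7 : (1 + 3 * p) * (1 - p) ^ 2 = 1 + p * (1 - 5 * p) + 3 * p ^ 3 := by ring
      linarith
    have h2 : p ≤ 0.02 / L := by rw [le_div_iff₀ (by linarith)]; exact hps
    have h3 : 3 * (0.02 / L) ≤ 0.1 / L := by
      rw [← mul_div_assoc]; gcongr; norm_num
    linarith


lemma prob_good {n : ℕ} {p L : ℝ} (h : PH n p L) (hLσ : 150 / Real.exp (-56160) ≤ L) :
    gnpProb n p (fun G => ¬ Good n L (Real.exp (-56160)) G) ≤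
      Real.exp (3 + L + Real.log L - n * p) + ((Real.exp (-(0.01 * L - 4)) + 0.1 / L) +
      (3 * Real.exp (-L) + (3 * (Real.exp 10 * (2 * L) ^ 6) * Real.exp (-L) +
      (3 * (25 * Real.exp 20 * (2 * L) ^ 4) * Real.exp (-(0.3 * L)) +
      (Real.exp (-L) + (Real.exp (-(0.1 * L)) + Real.exp (-(0.1 * L)))))))) := by
  have q0 := h.p0.le
  have q1 := h.p1'
  refine le_trans (prob_mono q0 q1 (fun G hG => ?_))
    ((prob_or q0 q1 _ _).trans (add_le_add (prob1 h)
    ((prob_or q0 q1 _ _).trans (add_le_add (prob2 h)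
    ((prob_or q0 q1 _ _).trans (add_le_add (prob3 h)
    ((prob_or q0 q1 _ _).trans (add_le_add (prob4 h)
    ((prob_or q0 q1 _ _).trans (add_le_add (prob5 h)
    ((prob_or q0 q1 _ _).trans (add_le_add (prob6 h (Real.exp_pos _) hLσ)
    ((prob_or q0 q1 _ _).trans (add_le_add (prob7 h) (prob8 h)))))))))))))))
  by_contra hc
  simp only [not_or, not_not] at hc
  exact hG ⟨hc.1, hc.2.1, hc.2.2.1, hc.2.2.2.1, hc.2.2.2.2.1, hc.2.2.2.2.2.1, hc.2.2.2.2.2.2.1,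
    hc.2.2.2.2.2.2.2⟩

lemma tendsto_exp_neg_mul (c : ℝ) (hc : 0 < c) :
    Tendsto (fun L : ℝ => Real.exp (-(c * L))) atTop (nhds 0) :=
  Real.tendsto_exp_neg_atTop_nhds_zero.comp (tendsto_id.const_mul_atTop hc)

lemma tendsto_pow_exp (k : ℕ) (c : ℝ) (hc : 0 < c) :
    Tendsto (fun L : ℝ => L ^ k * Real.exp (-(c * L))) atTop (nhds 0) := by
  have := (Real.tendsto_pow_mul_exp_neg_atTop_nhds_zero k).comp
    ((tendsto_id (α := ℝ)).const_mul_atTop hc)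
  have h2 := this.const_mul ((c ^ k)⁻¹)
  rw [mul_zero] at h2
  refine h2.congr fun L => ?_
  simp only [Function.comp, id]
  rw [mul_pow]
  field_simp

lemma bound_tendsto :
    Tendsto (fun L : ℝ => (Real.exp (-(0.01 * L - 4)) + 0.1 / L) +
      (3 * Real.exp (-L) + (3 * (Real.exp 10 * (2 * L) ^ 6) * Real.exp (-L) +
      (3 * (25 * Real.exp 20 * (2 * L) ^ 4) * Real.exp (-(0.3 * L)) +
      (Real.exp (-L) + (Real.exp (-(0.1 * L)) + Real.exp (-(0.1 * L)))))))) atTop (nhds 0) := by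
  have a1 : Tendsto (fun L : ℝ => Real.exp (-(0.01 * L - 4))) atTop (nhds 0) := by
    have := (tendsto_exp_neg_mul 0.01 (by norm_num)).const_mul (Real.exp 4)
    rw [mul_zero] at this
    refine this.congr fun L => ?_
    rw [← Real.exp_add]; congr 1; ring
  have a2 : Tendsto (fun L : ℝ => 0.1 / L) atTop (nhds 0) := tendsto_const_nhds.div_atTop tendsto_id
  have a3 : Tendsto (fun L : ℝ => Real.exp (-L)) atTop (nhds 0) :=
    Real.tendsto_exp_neg_atTop_nhds_zero
  have a4 : Tendsto (fun L : ℝ => 3 * (Real.exp 10 * (2 * L) ^ 6) * Real.exp (-L)) atTop (nhds 0) := by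
    have := (tendsto_pow_exp 6 1 (by norm_num)).const_mul (3 * Real.exp 10 * 2 ^ 6)
    rw [mul_zero] at this
    refine this.congr fun L => ?_
    rw [one_mul]; ring
  have a5 : Tendsto (fun L : ℝ => 3 * (25 * Real.exp 20 * (2 * L) ^ 4) * Real.exp (-(0.3 * L)))
      atTop (nhds 0) := by
    have := (tendsto_pow_exp 4 0.3 (by norm_num)).const_mul (3 * 25 * Real.exp 20 * 2 ^ 4)
    rw [mul_zero] at this
    refine this.congr fun L => ?_
    ring
  have a6 := tendsto_exp_neg_mul 0.1 (by norm_num)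
  have := (a1.add a2).add ((a3.const_mul 3).add (a4.add (a5.add (a3.add (a6.add a6)))))
  simpa using this

/-- Theorem 2: for `(ln n + ln ln n + ω(1))/n ≤ p ≤ 1.02 ln n / n`, w.h.p.
`r_ℓ(G, Hamiltonicity) = δ(G) - 1`. -/
theorem stmt1 (p : ℕ → ℝ) (hp0 : ∀ n, 0 ≤ p n)
    (hlow : Tendsto (fun n : ℕ => n * p n - Real.log n - Real.log (Real.log n)) atTop atTop)
    (hhigh : ∀ n : ℕ, p n ≤ 1.02 * Real.log n / n) :
    WHP p (fun n G => ∀ hn : 0 < n,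
      haveI : Nonempty (Fin n) := ⟨⟨0, hn⟩⟩
      ((∀ H : SimpleGraph (Fin n), H ≤ G → H.maxDegree ≤ G.minDegree - 2 →
          (G \ H).IsHamiltonian) ∧
        (∃ H : SimpleGraph (Fin n), H ≤ G ∧ H.maxDegree = G.minDegree - 1 ∧
          ¬ (G \ H).IsHamiltonian))) := by

  have hlog : Tendsto (fun n : ℕ => Real.log n) atTop atTop :=
    Real.tendsto_log_atTop.comp tendsto_natCast_atTop_atTop
  have hLn : ∀ᶠ n : ℕ in atTop, 100 * Real.log n ^ 2 ≤ (n : ℝ) := by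
    have h1 := (tendsto_pow_exp 2 1 (by norm_num)).comp hlog
    have h2 := h1.eventually (ge_mem_nhds (show (0 : ℝ) < 0.01 by norm_num))
    filter_upwards [h2, eventually_ge_atTop 1] with n hn h1n
    have hpos : (0 : ℝ) < n := by exact_mod_cast h1n
    simp only [Function.comp, one_mul] at hn
    rw [Real.exp_neg, Real.exp_log hpos, ← div_eq_mul_inv, div_le_iff₀ hpos] at hn
    linarith
  have hPH : ∀ᶠ n : ℕ in atTop, PH n (p n) (Real.log n) := by
    filter_upwards [hLn, eventually_ge_atTop 100, hlog.eventually_ge_atTop 1000,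
      hlow.eventually_ge_atTop 0] with n h1 h2 h3 h4
    have hpos : (0 : ℝ) < n := by
      have : 0 < n := by omega
      exact_mod_cast this
    have h5 : 0 ≤ Real.log (Real.log n) := Real.log_nonneg (by linarith)
    refine ⟨rfl, h2, h3, by linarith, ?_, h1⟩
    have := hhigh n
    rw [le_div_iff₀ hpos] at this
    linarith
  have hT : Tendsto (fun n : ℕ => 1 - (Real.exp (3 + Real.log n + Real.log (Real.log n) - n * p n) +
      ((Real.exp (-(0.01 * Real.log n - 4)) + 0.1 / Real.log n) +
      (3 * Real.exp (-Real.log n) + (3 * (Real.exp 10 * (2 * Real.log n) ^ 6) * Real.exp (-Real.log n) +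
      (3 * (25 * Real.exp 20 * (2 * Real.log n) ^ 4) * Real.exp (-(0.3 * Real.log n)) +
      (Real.exp (-Real.log n) + (Real.exp (-(0.1 * Real.log n)) +
        Real.exp (-(0.1 * Real.log n)))))))))) atTop (nhds 1) := by
    have b1 : Tendsto (fun n : ℕ => Real.exp (3 + Real.log n + Real.log (Real.log n) - n * p n))
        atTop (nhds 0) := by
      have := (Real.tendsto_exp_neg_atTop_nhds_zero.comp hlow).const_mul (Real.exp 3)
      rw [mul_zero] at this
      refine this.congr fun n => ?_
      simp only [Function.comp]
      rw [← Real.exp_add]; congr 1; ring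
    have b2 := bound_tendsto.comp hlog
    have := (b1.add b2).const_sub 1
    simp only [add_zero, sub_zero] at this
    exact this
  refine tendsto_of_tendsto_of_tendsto_of_le_of_le' hT tendsto_const_nhds ?_ ?_
  · filter_upwards [hPH, hlog.eventually_ge_atTop (150 / Real.exp (-56160)),
      hlog.eventually_ge_atTop (20000 + 320000 / Real.exp (-56160))] with n h h1 h2
    have h3 := prob_good h h1
    have h4 := prob_not (p n) (Good n (Real.log n) (Real.exp (-56160)))
    refine le_trans ?_ (prob_mono h.p0.le h.p1' (A := Good n (Real.log n) (Real.exp (-56160)))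
      fun G hG => det hG (Real.exp_pos _) (Real.exp_le_one_iff.2 (by norm_num)) h2 h.hn)
    rw [h4]
    linarith
  · filter_upwards [hPH] with n h
    rw [prob_not]
    exact sub_le_self _ (prob_nonneg h.p0.le h.p1' _)
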